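/- arXiv:math-ph/0703083 — 6 statements merged into one kernel-verified Lean document; each statement's English description precedes it below -/
import Mathlib

section
/- Let ν > 1/2 and 1 ≤ a < 2 with ν ≠ a. Let (φ_n) be a sequence of real-valued smooth functions on (0,∞), each with compact support contained in (0,∞), such that the following four sequences are Cauchy in L²(0,∞): (φ_n), (Aφ_n) where (Aφ)(x) = −φ''(x) + ((ν²−1/4)/x² + x²)·φ(x), (x ↦ x^{−a}·φ_n(x)), and (x ↦ x^{1−a}·φ_n'(x)). Then the sequences (x ↦ x^{−1−a/2}·φ_n(x)) and (x ↦ x^{−a/2}·φ_n'(x)) are also Cauchy in L²(0,∞). -/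
open MeasureTheory Set

/-- A sequence of real functions is Cauchy in `L²(0,∞)`. -/
def CauchyInL2 (f : ℕ → ℝ → ℝ) : Prop :=
  ∀ ε : ENNReal, 0 < ε → ∃ N : ℕ, ∀ m ≥ N, ∀ n ≥ N,
    eLpNorm (fun x => f m x - f n x) 2 (volume.restrict (Ioi (0:ℝ))) < ε

/-- Integrable on the half line with zero integral. -/
def ZeroInt (G : ℝ → ℝ) : Prop :=
  IntegrableOn G (Ioi (0:ℝ)) ∧ ∫ x in Ioi (0:ℝ), G x = 0

lemma integrableOn_of_supp {K : Set ℝ} (hK : IsCompact K) (hK0 : K ⊆ Ioi 0) {g : ℝ → ℝ}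
    (hg : ContinuousOn g (Ioi 0)) (hz : ∀ x, x ∉ K → g x = 0) : IntegrableOn g (Ioi (0:ℝ)) := by
  have h1 : IntegrableOn g K := (hg.mono hK0).integrableOn_compact hK
  exact h1.of_forall_sdiff_eq_zero measurableSet_Ioi (fun x hx => hz x hx.2)

lemma zeroInt_of_deriv {K : Set ℝ} (hK : IsCompact K) (hK0 : K ⊆ Ioi 0) {F G : ℝ → ℝ}
    (hF : ∀ x, 0 < x → HasDerivAt F (G x) x) (hFz : ∀ x, x ∉ K → F x = 0)
    (hG : ContinuousOn G (Ioi 0)) (hGz : ∀ x, x ∉ K → G x = 0) : ZeroInt G := by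
  have hi := integrableOn_of_supp hK hK0 hG hGz
  refine ⟨hi, ?_⟩
  have h0 : (0:ℝ) ∉ K := fun h => lt_irrefl (0:ℝ) (mem_Ioi.1 (hK0 h))
  have hc : ContinuousWithinAt F (Ici 0) 0 := by
    have : F =ᶠ[nhds 0] fun _ => 0 := by
      filter_upwards [hK.isClosed.isOpen_compl.mem_nhds h0] with x hx using hFz x hx
    exact (continuousAt_const.congr this.symm).continuousWithinAt
  have ht : Filter.Tendsto F Filter.atTop (nhds 0) := by
    obtain ⟨B, hB⟩ := hK.bddAbove
    refine tendsto_const_nhds.congr' ?_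
    filter_upwards [Filter.eventually_gt_atTop B] with x hx
    exact (hFz x (fun h => absurd (hB h) (not_le.2 hx))).symm
  have := integral_Ioi_of_hasDerivAt_of_tendsto hc (fun x hx => hF x hx) hi ht
  rw [this, hFz 0 h0, sub_zero]

lemma ZeroInt.comb {G H : ℝ → ℝ} (hG : ZeroInt G) (hH : ZeroInt H) (α β : ℝ) :
    ZeroInt (fun x => α * G x + β * H x) := by
  refine ⟨(hG.1.const_mul α).add (hH.1.const_mul β), ?_⟩
  rw [integral_add (hG.1.const_mul α) (hH.1.const_mul β), integral_const_mul, integral_const_mul,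
    hG.2, hH.2]; simp

/-- Test functions. -/
structure Tst (u : ℝ → ℝ) : Prop where
  sm : ContDiff ℝ (⊤ : ℕ∞) u
  cs : HasCompactSupport u
  sp : tsupport u ⊆ Ioi (0:ℝ)

noncomputable def opA (c : ℝ) (u : ℝ → ℝ) (x : ℝ) : ℝ := -(deriv (deriv u) x) + (c / x ^ 2 + x ^ 2) * u x

noncomputable def G1 (c s : ℝ) (u : ℝ → ℝ) (x : ℝ) : ℝ :=
  opA c u x * x ^ (-s) * u x - x ^ (-s) * deriv u x ^ 2
    - (c - s * (s + 1) / 2) * (x ^ (-s) / x ^ 2) * u x ^ 2 - x ^ 2 * x ^ (-s) * u x ^ 2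

noncomputable def G2 (c s : ℝ) (u : ℝ → ℝ) (x : ℝ) : ℝ :=
  opA c u x * (x * x ^ (-s) * deriv u x) - (1 - s) / 2 * (x ^ (-s) * deriv u x ^ 2)
    - c * (1 + s) / 2 * (x ^ (-s) / x ^ 2) * u x ^ 2
    + (3 - s) / 2 * (x ^ 2 * x ^ (-s) * u x ^ 2)

namespace Tst

lemma smd {u : ℝ → ℝ} (hu : Tst u) : ContDiff ℝ (⊤ : ℕ∞) (deriv u) := by
  have := hu.sm
  exact (contDiff_infty_iff_deriv.1 this).2

lemma smdd {u : ℝ → ℝ} (hu : Tst u) : ContDiff ℝ (⊤ : ℕ∞) (deriv (deriv u)) :=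
  (contDiff_infty_iff_deriv.1 hu.smd).2

lemma d1 {u : ℝ → ℝ} (hu : Tst u) (x : ℝ) : HasDerivAt u (deriv u x) x :=
  ((contDiff_infty_iff_deriv.1 hu.sm).1 x).hasDerivAt

lemma d2 {u : ℝ → ℝ} (hu : Tst u) (x : ℝ) : HasDerivAt (deriv u) (deriv (deriv u) x) x :=
  ((contDiff_infty_iff_deriv.1 hu.smd).1 x).hasDerivAt

lemma z0 {u : ℝ → ℝ} (_hu : Tst u) {x : ℝ} (hx : x ∉ tsupport u) : u x = 0 := image_eq_zero_of_notMem_tsupport hx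
lemma z1 {u : ℝ → ℝ} (_hu : Tst u) {x : ℝ} (hx : x ∉ tsupport u) : deriv u x = 0 :=
  image_eq_zero_of_notMem_tsupport (fun h => hx (tsupport_deriv_subset h))
lemma z2 {u : ℝ → ℝ} (_hu : Tst u) {x : ℝ} (hx : x ∉ tsupport u) : deriv (deriv u) x = 0 :=
  image_eq_zero_of_notMem_tsupport
    (fun h => hx (tsupport_deriv_subset (tsupport_deriv_subset h)))

lemma c0 {u : ℝ → ℝ} (hu : Tst u) : ContinuousOn u (Ioi 0) := hu.sm.continuous.continuousOn
lemma c1 {u : ℝ → ℝ} (hu : Tst u) : ContinuousOn (deriv u) (Ioi 0) := hu.smd.continuous.continuousOn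
lemma cA {u : ℝ → ℝ} (hu : Tst u) (c : ℝ) : ContinuousOn (opA c u) (Ioi 0) := by
  have h2 : ContinuousOn (deriv (deriv u)) (Ioi 0) := hu.smdd.continuous.continuousOn
  have h0 := hu.c0
  unfold opA
  have : ∀ x ∈ Ioi (0:ℝ), x ^ 2 ≠ 0 := fun x hx => pow_ne_zero _ (ne_of_gt hx)
  fun_prop (disch := assumption)

lemma zA {u : ℝ → ℝ} (hu : Tst u) (c : ℝ) {x : ℝ} (hx : x ∉ tsupport u) : opA c u x = 0 := by
  simp [opA, hu.z0 hx, hu.z2 hx]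
end Tst

lemma cr (s : ℝ) : ContinuousOn (fun x : ℝ => x ^ s) (Ioi 0) := fun x hx =>
  (Real.continuousAt_rpow_const x s (Or.inl (ne_of_gt hx))).continuousWithinAt

lemma dr (s : ℝ) {x : ℝ} (hx : 0 < x) : HasDerivAt (fun x : ℝ => x ^ (-s)) (-s * x ^ (-s) / x) x := by
  have := Real.hasDerivAt_rpow_const (x := x) (p := -s) (Or.inl hx.ne')
  rw [Real.rpow_sub_one hx.ne'] at this
  convert this using 1; ring

lemma zeroInt_G1 (c s : ℝ) {u : ℝ → ℝ} (hu : Tst u) : ZeroInt (G1 c s u) := by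
  have h0 := hu.c0
  have h1 := hu.c1
  have hA := hu.cA c
  have ht := cr (-s)
  have hn : ∀ x ∈ Ioi (0:ℝ), x ^ 2 ≠ 0 := fun x hx => pow_ne_zero _ (ne_of_gt hx)
  refine zeroInt_of_deriv hu.cs hu.sp
    (F := fun x => -(x ^ (-s) * u x * deriv u x) - s / 2 * (x ^ (-s) / x * u x ^ 2)) ?_ ?_ ?_ ?_
  · intro x hx
    have e := ((((dr s hx).mul (hu.d1 x)).mul (hu.d2 x)).neg).sub
      ((((dr s hx).div (hasDerivAt_id x) hx.ne').mul ((hu.d1 x).pow 2)).const_mul (s/2))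
    refine HasDerivAt.congr_deriv (f := _) e ?_
    simp only [Pi.mul_apply, Pi.pow_apply, Pi.div_apply, G1, opA, id]
    generalize x ^ (-s) = t
    field_simp
    ring
  · intro x hx; simp [hu.z0 hx]
  · unfold G1; fun_prop (disch := assumption)
  · intro x hx; simp [G1, hu.z0 hx, hu.z1 hx]

lemma zeroInt_G2 (c s : ℝ) {u : ℝ → ℝ} (hu : Tst u) : ZeroInt (G2 c s u) := by
  have h0 := hu.c0
  have h1 := hu.c1
  have hA := hu.cA c
  have ht := cr (-s)
  have hn : ∀ x ∈ Ioi (0:ℝ), x ^ 2 ≠ 0 := fun x hx => pow_ne_zero _ (ne_of_gt hx)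
  refine zeroInt_of_deriv hu.cs hu.sp
    (F := fun x => -1/2 * (x * x ^ (-s) * deriv u x ^ 2) + c / 2 * (x ^ (-s) / x * u x ^ 2)
      + 1/2 * (x ^ 3 * x ^ (-s) * u x ^ 2)) ?_ ?_ ?_ ?_
  · intro x hx
    have e := (((((hasDerivAt_id x).mul (dr s hx)).mul ((hu.d2 x).pow 2)).const_mul (-1/2)).add
      ((((dr s hx).div (hasDerivAt_id x) hx.ne').mul ((hu.d1 x).pow 2)).const_mul (c/2))).add
      (((((hasDerivAt_id x).pow 3).mul (dr s hx)).mul ((hu.d1 x).pow 2)).const_mul (1/2))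
    refine HasDerivAt.congr_deriv (f := _) e ?_
    simp only [Pi.mul_apply, Pi.pow_apply, Pi.div_apply, G2, opA, id]
    generalize x ^ (-s) = t
    field_simp
    ring
  · intro x hx; simp [hu.z0 hx, hu.z1 hx]
  · unfold G2; fun_prop (disch := assumption)
  · intro x hx; simp [G2, hu.z0 hx, hu.z1 hx]

lemma solve2 (p q r : ℝ) (h : r - p * q ≠ 0) : ∃ α β : ℝ, α + β * p = 1 ∧ α * q + β * r = 1 :=
  ⟨(r - p) / (r - p * q), (1 - q) / (r - p * q), by field_simp; ring, by field_simp; ring⟩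

lemma rpow_bd {a x : ℝ} (h0 : 0 ≤ a) (h2 : a ≤ 2) (hx : 0 < x) : x ^ (-a) ≤ 1 + 1 / x ^ 2 := by
  rcases le_total 1 x with h | h
  · have := Real.rpow_le_one_of_one_le_of_nonpos h (by linarith : -a ≤ 0)
    have : 0 < 1 / x ^ 2 := by positivity
    linarith
  · have := Real.rpow_le_rpow_of_exponent_ge hx h (by linarith : (-2:ℝ) ≤ -a)
    rw [Real.rpow_neg hx.le 2, Real.rpow_two] at this
    rw [one_div]; linarith

lemma abs_mul_bd (α y z : ℝ) : α * (y * z) ≤ |α| * ((y ^ 2 + z ^ 2) / 2) := by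
  have h1 : α * (y * z) ≤ |α| * |y * z| := by rw [← abs_mul]; exact le_abs_self _
  have h2 : |y * z| ≤ (y ^ 2 + z ^ 2) / 2 := by
    rw [abs_le]; constructor <;> nlinarith [sq_nonneg (y - z), sq_nonneg (y + z)]
  exact h1.trans (mul_le_mul_of_nonneg_left h2 (abs_nonneg _))

set_option maxHeartbeats 2000000 in
lemma bound (ν a : ℝ) (hν : 1/2 < ν) (ha1 : 1 ≤ a) (ha2 : a < 2) :
    ∃ C : ℝ, 0 ≤ C ∧ ∀ u, Tst u → ∃ G, ZeroInt G ∧ ∀ x, 0 < x →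
      x ^ (-a) / x ^ 2 * u x ^ 2 + x ^ (-a) * deriv u x ^ 2 ≤
      C * (u x ^ 2 + opA (ν ^ 2 - 1/4) u x ^ 2 + (x ^ (-a) * u x) ^ 2
        + (x * x ^ (-a) * deriv u x) ^ 2) + G x := by
  set c := ν ^ 2 - 1/4 with hc
  have hc0 : 0 < c := by nlinarith
  by_cases hcase : ν = a / 2
  · have hdet : (3 * c / 2) - (-1/2) * (c - 3) ≠ 0 := by
      have : ν < 1 := by linarith
      have : (3 * c / 2) - (-1/2) * (c - 3) < 0 := by rw [hc]; nlinarith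
      exact this.ne
    obtain ⟨α, β, h1, h2⟩ := solve2 _ _ _ hdet
    have hic : 0 < 1 / c := by positivity
    refine ⟨(α^2+β^2) + 2 * (|α| + |β|) + (1 + 1/c), by positivity, fun u hu =>
      ⟨_, (((zeroInt_G1 c 2 hu).comb (zeroInt_G2 c 2 hu) α β).comb (zeroInt_G1 c 0 hu)
        (-2) (-(1 + 1/c))), ?_⟩⟩
    intro x hx
    have ht := rpow_bd (by linarith) ha2.le hx
    have htp : 0 < x ^ (-a) := Real.rpow_pos_of_pos hx _
    simp only [G1, G2]
    rw [Real.rpow_neg hx.le 2, Real.rpow_two, neg_zero, Real.rpow_zero]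
    generalize x ^ (-a) = t at *
    generalize opA c u x = w
    generalize deriv u x = v
    generalize u x = f
    rw [one_div] at ht
    have hxy : x * x⁻¹ = 1 := mul_inv_cancel₀ hx.ne'
    have hy : 0 < x⁻¹ := by positivity
    simp only [div_eq_mul_inv _ (x ^ 2), ← inv_pow] at *
    generalize x⁻¹ = y at *
    have e1 : x ^ 2 * y ^ 2 = 1 := by rw [← mul_pow, hxy, one_pow]
    have e2 : x * y ^ 2 = y := by rw [pow_two, ← mul_assoc, hxy, one_mul]
    -- the s = 2 estimate
    have a1 : α * (w * (y^2 * f)) ≤ (α^2 * w^2 + (y^2*f)^2) / 2 := by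
      nlinarith [sq_nonneg (α * w - y^2*f)]
    have a2 : β * (w * (y * v)) ≤ (β^2 * w^2 + (y*v)^2) / 2 := by
      nlinarith [sq_nonneg (β * w - y*v)]
    have a3 : -α * f^2 ≤ |α| * f^2 := mul_le_mul_of_nonneg_right (neg_le_abs _) (sq_nonneg _)
    have a4 : β * f^2 ≤ |β| * f^2 := mul_le_mul_of_nonneg_right (le_abs_self _) (sq_nonneg _)
    have a5 : 0 ≤ |β| * f^2 := by positivity
    have b1 : t * y^2 * f^2 ≤ y^2 * f^2 + (y^2*f)^2 := by
      have := mul_le_mul_of_nonneg_right ht (by positivity : 0 ≤ y^2 * f^2)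
      nlinarith
    have b2 : t * v^2 ≤ v^2 + (y*v)^2 := by
      have := mul_le_mul_of_nonneg_right ht (by positivity : 0 ≤ v^2)
      nlinarith
    have b3 : (v^2 + y^2*f^2) ≤ (1 + 1/c) * (v^2 + c * y^2 * f^2) := by
      have : (1 + 1/c) * (v^2 + c * y^2 * f^2) = (v^2 + y^2*f^2) + (1/c * v^2 + c * y^2*f^2) := by
        field_simp; ring
      rw [this]
      have : 0 ≤ 1/c * v^2 + c * y^2*f^2 := by positivity
      linarith
    generalize 1 / c = d at *
    have b4 : (1 + d) * (w * f) ≤ (1 + d) * (w^2 + f^2) := by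
      apply mul_le_mul_of_nonneg_left _ (by linarith)
      nlinarith [sq_nonneg (w - f), sq_nonneg w, sq_nonneg f]
    have b5 : 0 ≤ (1 + d) * (x^2 * f^2) := by positivity
    have key : (y^2*f)^2 + (y*v)^2 = α * (w * (y^2 * f)) - α * f^2 + β * (w * (y*v)) + β/2 * f^2
        - (α * (w * y ^ 2 * f - y ^ 2 * v ^ 2 - (c - 2 * (2 + 1) / 2) * (y ^ 2 * y ^ 2) * f ^ 2 - x ^ 2 * y ^ 2 * f ^ 2)
         + β * (w * (x * y ^ 2 * v) - (1 - 2) / 2 * (y ^ 2 * v ^ 2) - c * (1 + 2) / 2 * (y ^ 2 * y ^ 2) * f ^ 2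
         + (3 - 2) / 2 * (x ^ 2 * y ^ 2 * f ^ 2))) := by
      rw [e1, e2]
      linear_combination (-(y*v)^2) * h1 - (y^2*f)^2 * h2
    have hR1 : 0 ≤ ((α^2+β^2) + 2 * (|α| + |β|) + (1 + d)) * ((t * f)^2 + (x*t*v)^2) := by positivity
    have hR2 : 0 ≤ ((α^2+β^2)) * f^2 := by positivity
    have hR3 : 0 ≤ (2 * (|α| + |β|)) * w^2 := by positivity
    linarith
  · have hdet : (c * (1 + a) / 2) - ((1 - a) / 2) * (c - a * (a + 1) / 2) ≠ 0 := by
      have : (c * (1 + a) / 2) - ((1 - a) / 2) * (c - a * (a + 1) / 2)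
        = a * (ν - a/2) * (ν + a/2) := by rw [hc]; ring
      rw [this]
      have h3 : ν - a/2 ≠ 0 := sub_ne_zero.2 hcase
      have h4 : ν + a/2 ≠ 0 := by positivity
      have h5 : a ≠ 0 := by positivity
      exact mul_ne_zero (mul_ne_zero h5 h3) h4
    obtain ⟨α, β, h1, h2⟩ := solve2 _ _ _ hdet
    refine ⟨(|α| + |β|) + 2 * (|α| + |β|), by positivity, fun u hu =>
      ⟨_, (((zeroInt_G1 c a hu).comb (zeroInt_G2 c a hu) α β).comb (zeroInt_G1 c 0 hu)
        (-1) (-(|α| + |β|))), ?_⟩⟩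
    intro x hx
    have ht := rpow_bd (by linarith) ha2.le hx
    have htp : 0 < x ^ (-a) := Real.rpow_pos_of_pos hx _
    simp only [G1, G2]
    rw [neg_zero, Real.rpow_zero]
    generalize x ^ (-a) = t at *
    generalize opA c u x = w
    generalize deriv u x = v
    generalize u x = f
    have hxt : x^2 * t ≤ x^2 + 1 := by
      have := mul_le_mul_of_nonneg_left ht (by positivity : 0 ≤ x^2)
      have e : x^2 * (1 + 1 / x^2) = x^2 + 1 := by field_simp
      linarith
    have hM : x^2 * t * f^2 ≤ x^2 * f^2 + f^2 := by
      have := mul_le_mul_of_nonneg_right hxt (sq_nonneg f)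
      linarith
    have hM0 : 0 ≤ x^2 * t * f^2 := by positivity
    have a1 := abs_mul_bd α w (t * f)
    have a2 := abs_mul_bd β w (x * t * v)
    set M := x^2 * t * f^2
    have a3 : -α * M ≤ |α| * M := mul_le_mul_of_nonneg_right (neg_le_abs _) hM0
    have a4 : β * ((3 - a) / 2 * M) ≤ |β| * M := by
      have i1 : β * ((3 - a) / 2 * M) ≤ |β| * ((3 - a) / 2 * M) :=
        mul_le_mul_of_nonneg_right (le_abs_self _) (mul_nonneg (by linarith) hM0)
      have i2 : (3 - a) / 2 * M ≤ M := by nlinarith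
      exact i1.trans (mul_le_mul_of_nonneg_left i2 (abs_nonneg _))
    have a5 : (|α| + |β|) * M ≤ (|α| + |β|) * (x^2 * f^2 + f^2) :=
      mul_le_mul_of_nonneg_left hM (by positivity)
    have a6 : (|α| + |β|) * (w * f) ≤ (|α| + |β|) * ((w^2 + f^2) / 2) := by
      apply mul_le_mul_of_nonneg_left _ (by positivity)
      nlinarith [sq_nonneg (w - f)]
    have a7 : 0 ≤ (|α| + |β|) * (v^2 + c * (1 / x^2) * f^2) := by positivity
    have p1 : 0 ≤ |α| * w^2 := by positivity
    have p2 : 0 ≤ |β| * w^2 := by positivity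
    have p3 : 0 ≤ |α| * f^2 := by positivity
    have p4 : 0 ≤ |β| * f^2 := by positivity
    have p5 : 0 ≤ |α| * (t*f)^2 := by positivity
    have p6 : 0 ≤ |β| * (t*f)^2 := by positivity
    have p7 : 0 ≤ |α| * (x*t*v)^2 := by positivity
    have p8 : 0 ≤ |β| * (x*t*v)^2 := by positivity
    have key : t / x^2 * f^2 + t * v^2 = α * (w * (t * f)) - α * M + β * (w * (x * t * v))
        + β * ((3 - a) / 2 * M)
        - (α * (w * t * f - t * v ^ 2 - (c - a * (a + 1) / 2) * (t / x ^ 2) * f ^ 2 - M)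
         + β * (w * (x * t * v) - (1 - a) / 2 * (t * v ^ 2) - c * (1 + a) / 2 * (t / x ^ 2) * f ^ 2
         + (3 - a) / 2 * M)) := by
      linear_combination (-(t * v^2)) * h1 - (t / x^2 * f^2) * h2
    linarith

lemma eLpNorm_lt_iff {f : ℝ → ℝ} (hf : ContinuousOn f (Ioi 0))
    (hi : IntegrableOn (fun x => f x ^ 2) (Ioi 0)) {r : ℝ} (hr : 0 < r) :
    eLpNorm f 2 (volume.restrict (Ioi (0:ℝ))) < ENNReal.ofReal r ↔
      ∫ x in Ioi (0:ℝ), f x ^ 2 < r ^ 2 := by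
  have hm : AEStronglyMeasurable f (volume.restrict (Ioi (0:ℝ))) :=
    hf.aestronglyMeasurable measurableSet_Ioi
  have hL : MemLp f 2 (volume.restrict (Ioi (0:ℝ))) := (memLp_two_iff_integrable_sq hm).2 hi
  have h0 : 0 ≤ ∫ x in Ioi (0:ℝ), f x ^ 2 := integral_nonneg fun x => sq_nonneg _
  rw [hL.eLpNorm_eq_integral_rpow_norm (by simp) (by simp), ENNReal.ofReal_lt_ofReal_iff hr]
  simp only [ENNReal.toReal_ofNat, Real.rpow_two, Real.norm_eq_abs, sq_abs]
  rw [← one_div, ← Real.sqrt_eq_rpow, Real.sqrt_lt' hr]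

lemma cauchyInL2_iff {f : ℕ → ℝ → ℝ} (hf : ∀ m n, ContinuousOn (fun x => f m x - f n x) (Ioi 0))
    (hi : ∀ m n, IntegrableOn (fun x => (f m x - f n x) ^ 2) (Ioi 0)) :
    CauchyInL2 f ↔ ∀ r : ℝ, 0 < r → ∃ N : ℕ, ∀ m ≥ N, ∀ n ≥ N,
      ∫ x in Ioi (0:ℝ), (f m x - f n x) ^ 2 < r := by
  constructor
  · intro h r hr
    obtain ⟨N, hN⟩ := h (ENNReal.ofReal (√r)) (ENNReal.ofReal_pos.2 (Real.sqrt_pos.2 hr))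
    refine ⟨N, fun m hm n hn => ?_⟩
    have := (eLpNorm_lt_iff (hf m n) (hi m n) (Real.sqrt_pos.2 hr)).1 (hN m hm n hn)
    rwa [Real.sq_sqrt hr.le] at this
  · intro h ε hε
    have hlt : 0 < min ε 1 := lt_min hε one_pos
    have hne : min ε 1 ≠ ⊤ := ne_top_of_le_ne_top ENNReal.one_ne_top (min_le_right _ _)
    have hr : 0 < (min ε 1).toReal := ENNReal.toReal_pos hlt.ne' hne
    obtain ⟨N, hN⟩ := h ((min ε 1).toReal ^ 2) (by positivity)
    refine ⟨N, fun m hm n hn => ?_⟩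
    have := (eLpNorm_lt_iff (hf m n) (hi m n) hr).2 (hN m hm n hn)
    rw [ENNReal.ofReal_toReal hne] at this
    exact this.trans_le (min_le_left _ _)

lemma Tst.sub {u v : ℝ → ℝ} (hu : Tst u) (hv : Tst v) : Tst (fun x => u x - v x) := by
  refine ⟨hu.sm.sub hv.sm, hu.cs.sub hv.cs, ?_⟩
  exact (tsupport_sub u v).trans (union_subset hu.sp hv.sp)

lemma int_combine {p q f1 f2 f3 f4 G : ℝ → ℝ} (hp : IntegrableOn p (Ioi 0))
    (hq : IntegrableOn q (Ioi 0)) (h1 : IntegrableOn f1 (Ioi 0)) (h2 : IntegrableOn f2 (Ioi 0))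
    (h3 : IntegrableOn f3 (Ioi 0)) (h4 : IntegrableOn f4 (Ioi 0)) (hG : ZeroInt G) (C : ℝ)
    (h : ∀ x ∈ Ioi (0:ℝ), p x + q x ≤ C * (f1 x + f2 x + f3 x + f4 x) + G x) :
    (∫ x in Ioi (0:ℝ), p x) + (∫ x in Ioi (0:ℝ), q x) ≤ C * ((∫ x in Ioi (0:ℝ), f1 x)
      + (∫ x in Ioi (0:ℝ), f2 x) + (∫ x in Ioi (0:ℝ), f3 x) + (∫ x in Ioi (0:ℝ), f4 x)) := by
  have i12 : IntegrableOn (fun x => f1 x + f2 x) (Ioi 0) := h1.add h2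
  have i123 : IntegrableOn (fun x => f1 x + f2 x + f3 x) (Ioi 0) := i12.add h3
  have i1234 : IntegrableOn (fun x => f1 x + f2 x + f3 x + f4 x) (Ioi 0) := i123.add h4
  have m := setIntegral_mono_on (hp.add hq) ((i1234.const_mul C).add hG.1) measurableSet_Ioi h
  have e1 := integral_add hp hq
  have e2 := integral_add (i1234.const_mul C) hG.1
  have e3 := integral_add i123 h4
  have e4 := integral_add i12 h3
  have e5 := integral_add h1 h2
  rw [integral_const_mul, hG.2, e3, e4, e5, add_zero] at e2
  rw [← e1, ← e2]
  exact m

theorem statement7 (ν a : ℝ) (hν : 1/2 < ν) (ha1 : 1 ≤ a) (ha2 : a < 2) (hνa : ν ≠ a)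
    (φ : ℕ → ℝ → ℝ)
    (hsmooth : ∀ n, ContDiff ℝ (⊤ : ℕ∞) (φ n))
    (hsupp : ∀ n, HasCompactSupport (φ n))
    (hsupp' : ∀ n, tsupport (φ n) ⊆ Ioi (0:ℝ))
    (hC1 : CauchyInL2 φ)
    (hC2 : CauchyInL2 (fun n x =>
      -(deriv (deriv (φ n)) x) + ((ν ^ 2 - 1/4) / x ^ 2 + x ^ 2) * φ n x))
    (hC3 : CauchyInL2 (fun n x => x ^ (-a) * φ n x))
    (hC4 : CauchyInL2 (fun n x => x ^ (1 - a) * deriv (φ n) x)) :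
    CauchyInL2 (fun n x => x ^ (-1 - a/2) * φ n x) ∧
    CauchyInL2 (fun n x => x ^ (-(a/2)) * deriv (φ n) x) := by
  obtain ⟨C, hC, hb⟩ := bound ν a hν ha1 ha2
  set c := ν ^ 2 - 1/4 with hc
  have T : ∀ n, Tst (φ n) := fun n => ⟨hsmooth n, hsupp n, hsupp' n⟩
  have D : ∀ m n, Tst (fun x => φ m x - φ n x) := fun m n => (T m).sub (T n)
  have dD : ∀ m n x, deriv (fun x => φ m x - φ n x) x = deriv (φ m) x - deriv (φ n) x :=
    fun m n x => (((T m).d1 x).sub ((T n).d1 x)).deriv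
  have ddD : ∀ m n x, deriv (deriv (fun x => φ m x - φ n x)) x
      = deriv (deriv (φ m)) x - deriv (deriv (φ n)) x := by
    intro m n x
    rw [show deriv (fun x => φ m x - φ n x) = fun x => deriv (φ m) x - deriv (φ n) x from
      funext (dD m n)]
    exact (((T m).d2 x).sub ((T n).d2 x)).deriv
  -- general continuity and integrability
  have I : ∀ m n (g : ℝ → ℝ), ContinuousOn g (Ioi 0) →
      (∀ x, x ∉ tsupport (fun x => φ m x - φ n x) → g x = 0) →
      IntegrableOn (fun x => g x ^ 2) (Ioi 0) := fun m n g hg hz =>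
    integrableOn_of_supp (D m n).cs (D m n).sp (hg.pow 2) (fun x hx => by simp [hz x hx])
  -- differences
  have e2 : ∀ m n, (fun x => (-(deriv (deriv (φ m)) x) + (c / x ^ 2 + x ^ 2) * φ m x)
      - (-(deriv (deriv (φ n)) x) + (c / x ^ 2 + x ^ 2) * φ n x))
      = opA c (fun x => φ m x - φ n x) := by
    intro m n; funext x; simp only [opA, ddD]; ring
  have e3 : ∀ (s : ℝ) m n, (fun x => x ^ s * φ m x - x ^ s * φ n x)
      = fun x => x ^ s * (fun x => φ m x - φ n x) x := by
    intro s m n; funext x; ring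
  have e4 : ∀ (s : ℝ) m n, (fun x => x ^ s * deriv (φ m) x - x ^ s * deriv (φ n) x)
      = fun x => x ^ s * deriv (fun x => φ m x - φ n x) x := by
    intro s m n; funext x; rw [dD]; ring
  have k1 : ∀ m n, ContinuousOn (fun x => φ m x - φ n x) (Ioi 0) := fun m n => (D m n).c0
  have j1 : ∀ m n, IntegrableOn (fun x => (φ m x - φ n x) ^ 2) (Ioi 0) := fun m n =>
    I m n _ (k1 m n) fun x hx => (D m n).z0 hx
  have k2 : ∀ m n, ContinuousOn (fun x => (-(deriv (deriv (φ m)) x) + (c / x ^ 2 + x ^ 2) * φ m x)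
      - (-(deriv (deriv (φ n)) x) + (c / x ^ 2 + x ^ 2) * φ n x)) (Ioi 0) := fun m n => by
    rw [e2]; exact (D m n).cA c
  have j2 : ∀ m n, IntegrableOn (fun x => ((-(deriv (deriv (φ m)) x) + (c / x ^ 2 + x ^ 2) * φ m x)
      - (-(deriv (deriv (φ n)) x) + (c / x ^ 2 + x ^ 2) * φ n x)) ^ 2) (Ioi 0) := fun m n =>
    I m n _ (k2 m n) fun x hx => (congrFun (e2 m n) x).trans ((D m n).zA c hx)
  have k3 : ∀ (s : ℝ) m n, ContinuousOn (fun x => x ^ s * φ m x - x ^ s * φ n x) (Ioi 0) :=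
    fun s m n => by rw [e3]; exact (cr s).mul (D m n).c0
  have j3 : ∀ (s : ℝ) m n, IntegrableOn (fun x => (x ^ s * φ m x - x ^ s * φ n x) ^ 2) (Ioi 0) :=
    fun s m n => I m n _ (k3 s m n) fun x hx => (congrFun (e3 s m n) x).trans (by
      have := (D m n).z0 hx; simp only at this ⊢; rw [this, mul_zero])
  have k4 : ∀ (s : ℝ) m n,
      ContinuousOn (fun x => x ^ s * deriv (φ m) x - x ^ s * deriv (φ n) x) (Ioi 0) :=
    fun s m n => by rw [e4]; exact (cr s).mul (D m n).c1
  have j4 : ∀ (s : ℝ) m n,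
      IntegrableOn (fun x => (x ^ s * deriv (φ m) x - x ^ s * deriv (φ n) x) ^ 2) (Ioi 0) :=
    fun s m n => I m n _ (k4 s m n) fun x hx => (congrFun (e4 s m n) x).trans (by
      rw [(D m n).z1 hx, mul_zero])
  rw [cauchyInL2_iff k1 j1] at hC1
  rw [cauchyInL2_iff k2 j2] at hC2
  rw [cauchyInL2_iff (k3 _) (j3 _)] at hC3
  rw [cauchyInL2_iff (k4 _) (j4 _)] at hC4
  have main : ∀ m n,
      (∫ x in Ioi (0:ℝ), (x ^ (-1 - a/2) * φ m x - x ^ (-1 - a/2) * φ n x) ^ 2)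
      + (∫ x in Ioi (0:ℝ), (x ^ (-(a/2)) * deriv (φ m) x - x ^ (-(a/2)) * deriv (φ n) x) ^ 2)
      ≤ C * ((∫ x in Ioi (0:ℝ), (φ m x - φ n x) ^ 2)
        + (∫ x in Ioi (0:ℝ), ((-(deriv (deriv (φ m)) x) + (c / x ^ 2 + x ^ 2) * φ m x)
      - (-(deriv (deriv (φ n)) x) + (c / x ^ 2 + x ^ 2) * φ n x)) ^ 2)
        + (∫ x in Ioi (0:ℝ), (x ^ (-a) * φ m x - x ^ (-a) * φ n x) ^ 2)
        + (∫ x in Ioi (0:ℝ), (x ^ (1-a) * deriv (φ m) x - x ^ (1-a) * deriv (φ n) x) ^ 2)) := by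
    intro m n
    obtain ⟨G, hG, hle⟩ := hb _ (D m n)
    refine int_combine (j3 _ m n) (j4 _ m n) (j1 m n) (j2 m n) (j3 _ m n) (j4 _ m n) hG C ?_
    intro x hx
    have hx : 0 < x := hx
    have := hle x hx
    have q2 := congrFun (e2 m n) x
    have q3 := congrFun (e3 (-a) m n) x
    have q3' := congrFun (e3 (-1 - a/2) m n) x
    have q4 := congrFun (e4 (1-a) m n) x
    have q4' := congrFun (e4 (-(a/2)) m n) x
    have r0 : (x ^ (-(a/2))) ^ 2 = x ^ (-a) := by
      rw [← Real.rpow_natCast, ← Real.rpow_mul hx.le]; congr 1; push_cast; ring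
    have r1 : (x ^ (-1 - a/2)) ^ 2 = x ^ (-a) / x ^ 2 := by
      rw [← Real.rpow_natCast, ← Real.rpow_mul hx.le, ← Real.rpow_natCast x 2,
        ← Real.rpow_sub hx]; congr 1; push_cast; ring
    have r2 : x ^ (1 - a) = x * x ^ (-a) := by
      rw [sub_eq_add_neg, Real.rpow_add hx, Real.rpow_one]
    rw [q3', q4', q2, q3, q4, mul_pow, mul_pow, r0, r1, r2]
    exact this
  have fin : ∀ r : ℝ, 0 < r → ∃ N : ℕ, ∀ m ≥ N, ∀ n ≥ N,
      (∫ x in Ioi (0:ℝ), (x ^ (-1 - a/2) * φ m x - x ^ (-1 - a/2) * φ n x) ^ 2)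
      + (∫ x in Ioi (0:ℝ), (x ^ (-(a/2)) * deriv (φ m) x - x ^ (-(a/2)) * deriv (φ n) x) ^ 2)
      < r := by
    intro r hr
    have hd : 0 < r / (4 * (C + 1)) := by positivity
    obtain ⟨N1, h1⟩ := hC1 _ hd
    obtain ⟨N2, h2⟩ := hC2 _ hd
    obtain ⟨N3, h3⟩ := hC3 _ hd
    obtain ⟨N4, h4⟩ := hC4 _ hd
    refine ⟨max (max N1 N2) (max N3 N4), fun m hm n hn => (main m n).trans_lt ?_⟩
    simp only [ge_iff_le, max_le_iff] at hm hn
    have g1 := h1 m hm.1.1 n hn.1.1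
    have g2 := h2 m hm.1.2 n hn.1.2
    have g3 := h3 m hm.2.1 n hn.2.1
    have g4 := h4 m hm.2.2 n hn.2.2
    calc _ ≤ C * (4 * (r / (4 * (C + 1)))) := mul_le_mul_of_nonneg_left (by linarith) hC
      _ < (C + 1) * (4 * (r / (4 * (C + 1)))) := by
        apply mul_lt_mul_of_pos_right (by linarith) (by positivity)
      _ = r := by field_simp
  rw [cauchyInL2_iff (k3 _) (j3 _), cauchyInL2_iff (k4 _) (j4 _)]
  refine ⟨fun r hr => ?_, fun r hr => ?_⟩
  · obtain ⟨N, hN⟩ := fin r hr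
    refine ⟨N, fun m hm n hn => lt_of_le_of_lt ?_ (hN m hm n hn)⟩
    exact le_add_of_nonneg_right (integral_nonneg fun x => sq_nonneg _)
  · obtain ⟨N, hN⟩ := fin r hr
    refine ⟨N, fun m hm n hn => lt_of_le_of_lt ?_ (hN m hm n hn)⟩
    exact le_add_of_nonneg_left (integral_nonneg fun x => sq_nonneg _)
end

section
/- Let 1/2 < ν < 1. Let (φ_n) be a sequence of real-valued smooth functions on (0,∞), each with compact support contained in (0,∞), such that (φ_n) and (Aφ_n) are Cauchy in L²(0,∞), where (Aφ)(x) = −φ''(x) + ((ν²−1/4)/x² + x²)·φ(x). Then the sequences of functions x ↦ x^{−ν−1/2}·φ_n(x) and x ↦ x^{−ν+1/2}·φ_n'(x) converge uniformly on (0,1], their uniform limits F and G are continuous on (0,1] and satisfy lim_{x→0⁺} F(x) = 0 and lim_{x→0⁺} G(x) = 0; in particular, the L²(0,∞)-limit φ of (φ_n) has a representative satisfying φ(x) = o(x^{ν+1/2}) as x → 0⁺. -/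
open MeasureTheory Set Filter Topology Asymptotics

lemma aux_cs (f : ℝ → ℝ) (K d x : ℝ) (hK : 0 ≤ K) (hd : 0 < d) (hdx : d ≤ x)
    (hf : ContinuousOn f (Icc d x))
    (hn : eLpNorm f 2 (volume.restrict (Ioi (0:ℝ))) ≤ ENNReal.ofReal K) :
    ∫ t in d..x, |f t| ≤ K * x ^ (1/2 : ℝ) := by
  have hx : 0 < x := hd.trans_le hdx
  rw [intervalIntegral.integral_of_le hdx]
  have hm : AEStronglyMeasurable f (volume.restrict (Ioc d x)) :=
    (hf.mono Ioc_subset_Icc_self).aestronglyMeasurable measurableSet_Ioc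
  have h1 : eLpNorm f 1 (volume.restrict (Ioc d x)) ≤ ENNReal.ofReal (K * x ^ (1/2 : ℝ)) := by
    have h := eLpNorm_le_eLpNorm_mul_rpow_measure_univ (p := 1) (q := 2)
      (μ := volume.restrict (Ioc d x)) (f := f) (by norm_num) hm
    refine h.trans ?_
    rw [ENNReal.ofReal_mul hK]
    gcongr
    · refine (eLpNorm_mono_measure f (Measure.restrict_mono ?_ le_rfl)).trans hn
      intro t ht
      exact hd.trans ht.1
    · rw [Measure.restrict_apply_univ, Real.volume_Ioc, ← ENNReal.ofReal_rpow_of_pos hx]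
      have : (1 / ENNReal.toReal 1 - 1 / ENNReal.toReal 2) = (1/2 : ℝ) := by norm_num
      rw [this]
      gcongr
      linarith
  rw [eLpNorm_one_eq_lintegral_enorm] at h1
  have h2 := integral_norm_eq_lintegral_enorm hm
  simp only [Real.norm_eq_abs] at h2
  rw [h2]
  exact ENNReal.toReal_le_of_le_ofReal (by positivity) h1

lemma aux_pick (ψ : ℝ → ℝ) (h0 : ψ =ᶠ[𝓝 0] fun _ => 0) (x : ℝ) (hx : 0 < x) :
    ∃ d, 0 < d ∧ d < x ∧ ψ d = 0 ∧ deriv ψ d = 0 := by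
  have h1 := h0.deriv
  have h2 : ∀ᶠ y in 𝓝[>] (0:ℝ), ψ y = 0 ∧ deriv ψ y = 0 := by
    apply Filter.Eventually.filter_mono nhdsWithin_le_nhds
    filter_upwards [h0, h1] with y a b
    simp_all
  obtain ⟨d, ⟨a, b⟩, c⟩ := (h2.and (Ioo_mem_nhdsGT hx)).exists
  exact ⟨d, c.1, c.2, a, b⟩

lemma aux_w (ν : ℝ) (hν : 1/2 < ν) (ψ : ℝ → ℝ) (hs : ContDiff ℝ (⊤ : ℕ∞) ψ)
    (h0 : ψ =ᶠ[𝓝 0] fun _ => 0) (K : ℝ) (hK : 0 ≤ K)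
    (h1 : eLpNorm ψ 2 (volume.restrict (Ioi (0:ℝ))) ≤ ENNReal.ofReal K)
    (h2 : eLpNorm (fun x => -(deriv (deriv ψ) x) + ((ν ^ 2 - 1/4) / x ^ 2 + x ^ 2) * ψ x) 2
      (volume.restrict (Ioi (0:ℝ))) ≤ ENNReal.ofReal K) (x : ℝ) (hx : x ∈ Ioc (0:ℝ) 1) :
    |x ^ (ν + 1/2) * deriv ψ x - (ν + 1/2) * x ^ (ν - 1/2) * ψ x| ≤
      2 * K * x ^ (1/2 : ℝ) * x ^ (ν + 1/2) := by
  obtain ⟨d, hd, hdx, e1, e2⟩ := aux_pick ψ h0 x hx.1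
  have hdψ : ContDiff ℝ (⊤ : ℕ∞) (deriv ψ) := (contDiff_infty_iff_deriv.1 hs).2
  have hddψ : ContDiff ℝ (⊤ : ℕ∞) (deriv (deriv ψ)) := (contDiff_infty_iff_deriv.1 hdψ).2
  set A : ℝ → ℝ := fun x => -(deriv (deriv ψ) x) + ((ν ^ 2 - 1/4) / x ^ 2 + x ^ 2) * ψ x with hA
  have hAc : ContinuousOn A (Icc d x) := by
    have : ∀ y ∈ Icc d x, y ^ 2 ≠ 0 := fun y hy => by
      have : 0 < y := hd.trans_le hy.1
      positivity
    have c1 := hddψ.continuous.continuousOn (s := Icc d x)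
    have c2 := hs.continuous.continuousOn (s := Icc d x)
    refine c1.neg.add (ContinuousOn.mul (ContinuousOn.add ?_ (by fun_prop)) c2)
    exact ContinuousOn.div (by fun_prop) (by fun_prop) this
  have i1 := aux_cs ψ K d x hK hd hdx.le hs.continuous.continuousOn h1
  have i2 := aux_cs A K d x hK hd hdx.le hAc h2
  have hrc : ContinuousOn (fun t : ℝ => t ^ (ν + 1/2)) (uIcc d x) := by
    intro t ht
    rw [uIcc_of_le hdx.le] at ht
    exact (Real.continuousAt_rpow_const _ _ (Or.inl (hd.trans_le ht.1).ne')).continuousWithinAt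
  have hAc' : ContinuousOn A (uIcc d x) := by rwa [uIcc_of_le hdx.le]
  have hψc : ContinuousOn ψ (uIcc d x) := hs.continuous.continuousOn
  have key := intervalIntegral.integral_eq_sub_of_hasDerivAt (a := d) (b := x)
    (f := fun t => t ^ (ν + 1/2) * deriv ψ t - (ν + 1/2) * t ^ (ν - 1/2) * ψ t)
    (f' := fun t => - (t ^ (ν + 1/2) * (A t - t ^ 2 * ψ t))) (by
      intro t ht
      rw [uIcc_of_le hdx.le] at ht
      have ht0 : 0 < t := hd.trans_le ht.1
      have p1 : HasDerivAt (fun t : ℝ => t ^ (ν + 1/2)) _ t :=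
        Real.hasDerivAt_rpow_const (Or.inl ht0.ne')
      have p2 : HasDerivAt (fun t : ℝ => t ^ (ν - 1/2)) _ t :=
        Real.hasDerivAt_rpow_const (Or.inl ht0.ne')
      have q1 : HasDerivAt ψ (deriv ψ t) t := (hs.differentiable (by simp) t).hasDerivAt
      have q2 : HasDerivAt (deriv ψ) (deriv (deriv ψ) t) t :=
        (hdψ.differentiable (by simp) t).hasDerivAt
      have := (p1.mul q2).sub ((p2.const_mul (ν + 1/2)).mul q1)
      refine this.congr_deriv ?_
      have r1 : t ^ (ν + 1/2) = t ^ (ν - 1/2 - 1) * t ^ 2 := by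
        rw [← Real.rpow_natCast t 2, ← Real.rpow_add ht0]; congr 1; push_cast; ring
      have r2 : t ^ (ν - 1/2) = t ^ (ν - 1/2 - 1) * t := by
        nth_rw 3 [← Real.rpow_one t]
        rw [← Real.rpow_add ht0]; congr 1; ring
      have r3 : ν + 1/2 - 1 = ν - 1/2 := by ring
      rw [r3, r1, r2, hA]
      field_simp
      ring) ((hrc.mul (hAc'.sub ((continuousOn_pow 2).mul hψc))).neg.intervalIntegrable)
  simp only [e1, e2, mul_zero, sub_zero] at key
  rw [← key]
  have n1 : |∫ t in d..x, - (t ^ (ν + 1/2) * (A t - t ^ 2 * ψ t))| ≤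
      ∫ t in d..x, x ^ (ν + 1/2) * (|A t| + |ψ t|) := by
    rw [← Real.norm_eq_abs]
    refine intervalIntegral.norm_integral_le_of_norm_le hdx.le ?_ ?_
    · refine Filter.Eventually.of_forall fun t ht => ?_
      have ht0 : 0 < t := hd.trans ht.1
      rw [norm_neg, norm_mul, Real.norm_eq_abs, Real.norm_eq_abs,
        abs_of_nonneg (Real.rpow_nonneg ht0.le _)]
      have hb : |A t - t ^ 2 * ψ t| ≤ |A t| + |ψ t| := by
        refine (abs_sub _ _).trans ?_
        rw [abs_mul, abs_of_nonneg (sq_nonneg t)]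
        have : t ^ 2 ≤ 1 := pow_le_one₀ ht0.le (ht.2.trans hx.2)
        nlinarith [abs_nonneg (ψ t)]
      have hpx : 0 ≤ x ^ (ν + 1/2) := Real.rpow_nonneg hx.1.le _
      have hpt : t ^ (ν + 1/2) ≤ x ^ (ν + 1/2) :=
        Real.rpow_le_rpow ht0.le ht.2 (by linarith)
      exact mul_le_mul hpt hb (abs_nonneg _) hpx
    · exact (continuousOn_const.mul (hAc'.abs.add hψc.abs)).intervalIntegrable
  refine n1.trans ?_
  rw [intervalIntegral.integral_const_mul, intervalIntegral.integral_add
    hAc'.abs.intervalIntegrable hψc.abs.intervalIntegrable]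
  have : 0 ≤ x ^ (ν + 1/2) := Real.rpow_nonneg hx.1.le _
  nlinarith

lemma aux_key (ν : ℝ) (hν : 1/2 < ν) (hν1 : ν < 1) (ψ : ℝ → ℝ) (hs : ContDiff ℝ (⊤ : ℕ∞) ψ)
    (h0 : ψ =ᶠ[𝓝 0] fun _ => 0) (K : ℝ) (hK : 0 ≤ K)
    (h1 : eLpNorm ψ 2 (volume.restrict (Ioi (0:ℝ))) ≤ ENNReal.ofReal K)
    (h2 : eLpNorm (fun x => -(deriv (deriv ψ) x) + ((ν ^ 2 - 1/4) / x ^ 2 + x ^ 2) * ψ x) 2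
      (volume.restrict (Ioi (0:ℝ))) ≤ ENNReal.ofReal K) (x : ℝ) (hx : x ∈ Ioc (0:ℝ) 1) :
    |x ^ (-ν - 1/2) * ψ x| ≤ 5 / (1 - ν) * K ∧
    |x ^ (-ν + 1/2) * deriv ψ x| ≤ 5 / (1 - ν) * K := by
  have hw := aux_w ν hν ψ hs h0 K hK h1 h2
  obtain ⟨d, hd, hdx, e1, e2⟩ := aux_pick ψ h0 x hx.1
  have hν' : 0 < 1 - ν := by linarith
  have hu : ∀ t ∈ Ioc (0:ℝ) 1, HasDerivAt (fun t => t ^ (-ν - 1/2) * ψ t)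
      (t ^ (-2 * ν - 1) *
        (t ^ (ν + 1/2) * deriv ψ t - (ν + 1/2) * t ^ (ν - 1/2) * ψ t)) t := by
    intro t ht
    have p1 : HasDerivAt (fun t : ℝ => t ^ (-ν - 1/2)) _ t :=
      Real.hasDerivAt_rpow_const (Or.inl ht.1.ne')
    have q1 : HasDerivAt ψ (deriv ψ t) t := (hs.differentiable (by simp) t).hasDerivAt
    refine (p1.mul q1).congr_deriv ?_
    have r1 : t ^ (-ν - 1/2) = t ^ (-2 * ν - 1) * t ^ (ν + 1/2) := by
      rw [← Real.rpow_add ht.1]; congr 1; ring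
    have r2 : t ^ (-ν - 1/2 - 1) = t ^ (-2 * ν - 1) * t ^ (ν - 1/2) := by
      rw [← Real.rpow_add ht.1]; congr 1; ring
    rw [r1, r2]; ring
  have hub : ∀ t ∈ Ioc (0:ℝ) 1, |t ^ (-2 * ν - 1) *
        (t ^ (ν + 1/2) * deriv ψ t - (ν + 1/2) * t ^ (ν - 1/2) * ψ t)| ≤ 2 * K * t ^ (-ν) := by
    intro t ht
    rw [abs_mul, abs_of_nonneg (Real.rpow_nonneg ht.1.le _)]
    refine (mul_le_mul_of_nonneg_left (hw t ht) (Real.rpow_nonneg ht.1.le _)).trans_eq ?_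
    have r : t ^ (-ν) = t ^ (-2 * ν - 1) * t ^ (1/2 : ℝ) * t ^ (ν + 1/2) := by
      rw [← Real.rpow_add ht.1, ← Real.rpow_add ht.1]; congr 1; ring
    rw [r]; ring
  have hmem : ∀ t ∈ Icc d x, t ∈ Ioc (0:ℝ) 1 := fun t ht => ⟨hd.trans_le ht.1, ht.2.trans hx.2⟩
  have hB : ∀ t ∈ Ioc (0:ℝ) 1, HasDerivAt (fun t : ℝ => 2 * K / (1 - ν) * t ^ (1 - ν))
      (2 * K * t ^ (-ν)) t := by
    intro t ht
    have p1 : HasDerivAt (fun t : ℝ => t ^ (1 - ν)) _ t :=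
      Real.hasDerivAt_rpow_const (Or.inl ht.1.ne')
    refine (p1.const_mul (2 * K / (1 - ν))).congr_deriv ?_
    have : 1 - ν - 1 = -ν := by ring
    rw [this]
    field_simp
  have hux := image_norm_le_of_norm_deriv_right_le_deriv_boundary' (a := d) (b := x)
    (f := fun t => t ^ (-ν - 1/2) * ψ t) (B := fun t : ℝ => 2 * K / (1 - ν) * t ^ (1 - ν))
    (fun t ht => (hu t (hmem t ht)).continuousAt.continuousWithinAt)
    (fun t ht => (hu t (hmem t (Ico_subset_Icc_self ht))).hasDerivWithinAt)
    (by simp only [e1, mul_zero, norm_zero]; positivity)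
    (fun t ht => (hB t (hmem t ht)).continuousAt.continuousWithinAt)
    (fun t ht => (hB t (hmem t (Ico_subset_Icc_self ht))).hasDerivWithinAt)
    (fun t ht => hub t (hmem t (Ico_subset_Icc_self ht))) (right_mem_Icc.2 hdx.le)
  simp only [Real.norm_eq_abs] at hux
  have hx1 : x ^ (1 - ν) ≤ 1 := Real.rpow_le_one hx.1.le hx.2 hν'.le
  have hux' : |x ^ (-ν - 1/2) * ψ x| ≤ 2 * K / (1 - ν) :=
    hux.trans (mul_le_of_le_one_right (by positivity) hx1)
  have hL : 0 ≤ K / (1 - ν) := by positivity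
  have hKL : K ≤ K / (1 - ν) := by rw [le_div_iff₀ hν']; nlinarith
  have s1 : 2 * K / (1 - ν) = 2 * (K / (1 - ν)) := by ring
  have s2 : 5 / (1 - ν) * K = 5 * (K / (1 - ν)) := by ring
  rw [s1] at hux'
  rw [s2]
  refine ⟨by linarith, ?_⟩
  have hw2 : |x * (x ^ (-2 * ν - 1) *
        (x ^ (ν + 1/2) * deriv ψ x - (ν + 1/2) * x ^ (ν - 1/2) * ψ x))| ≤ 2 * K := by
    rw [abs_mul, abs_of_pos hx.1]
    refine (mul_le_mul_of_nonneg_left (hub x hx) hx.1.le).trans ?_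
    have : x * (2 * K * x ^ (-ν)) = 2 * K * x ^ (1 - ν) := by
      rw [sub_eq_add_neg, Real.rpow_add hx.1, Real.rpow_one]; ring
    rw [this]
    exact mul_le_of_le_one_right (by positivity) hx1
  have eqn : x ^ (-ν + 1/2) * deriv ψ x = (ν + 1/2) * (x ^ (-ν - 1/2) * ψ x) +
      x * (x ^ (-2 * ν - 1) *
        (x ^ (ν + 1/2) * deriv ψ x - (ν + 1/2) * x ^ (ν - 1/2) * ψ x)) := by
    have r1 : x ^ (-ν + 1/2) = x ^ (1:ℝ) * x ^ (-2 * ν - 1) * x ^ (ν + 1/2) := by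
      rw [← Real.rpow_add hx.1, ← Real.rpow_add hx.1]; congr 1; ring
    have r2 : x ^ (-ν - 1/2) = x ^ (1:ℝ) * x ^ (-2 * ν - 1) * x ^ (ν - 1/2) := by
      rw [← Real.rpow_add hx.1, ← Real.rpow_add hx.1]; congr 1; ring
    rw [r1, r2, Real.rpow_one]; ring
  rw [eqn]
  refine (abs_add_le _ _).trans ?_
  rw [abs_mul, abs_of_pos (by linarith : 0 < ν + 1/2)]
  nlinarith [abs_nonneg (x ^ (-ν - 1/2) * ψ x)]

lemma aux_unif (u : ℕ → ℝ → ℝ)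
    (hc : ∀ n, ContinuousOn (u n) (Ioc (0:ℝ) 1))
    (hz : ∀ n, ∀ᶠ x in 𝓝[>] (0:ℝ), u n x = 0)
    (hC : ∀ ε > 0, ∃ N, ∀ m ≥ N, ∀ n ≥ N, ∀ x ∈ Ioc (0:ℝ) 1, |u m x - u n x| < ε) :
    ∃ F : ℝ → ℝ, TendstoUniformlyOn u F atTop (Ioc (0:ℝ) 1) ∧ ContinuousOn F (Ioc (0:ℝ) 1) ∧
      Tendsto F (𝓝[>] 0) (𝓝 0) := by
  have hU : UniformCauchySeqOn u atTop (Ioc (0:ℝ) 1) := by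
    rw [Metric.uniformCauchySeqOn_iff]
    intro ε hε
    obtain ⟨N, hN⟩ := hC ε hε
    exact ⟨N, fun m hm n hn x hx => by rw [Real.dist_eq]; exact hN m hm n hn x hx⟩
  have hp : ∀ x, ∃ y, x ∈ Ioc (0:ℝ) 1 → Tendsto (fun n => u n x) atTop (𝓝 y) := by
    intro x
    by_cases hx : x ∈ Ioc (0:ℝ) 1
    · obtain ⟨y, hy⟩ := cauchySeq_tendsto_of_complete (hU.cauchySeq hx)
      exact ⟨y, fun _ => hy⟩
    · exact ⟨0, fun h => absurd h hx⟩
  choose F hF using hp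
  have hT : TendstoUniformlyOn u F atTop (Ioc (0:ℝ) 1) :=
    hU.tendstoUniformlyOn_of_tendsto hF
  refine ⟨F, hT, hT.continuousOn (Frequently.of_forall hc), ?_⟩
  rw [Metric.tendsto_nhds]
  intro ε hε
  obtain ⟨n, hn⟩ := ((Metric.tendstoUniformlyOn_iff.1 hT) ε hε).exists
  filter_upwards [hz n, Ioc_mem_nhdsGT (zero_lt_one' ℝ)] with x h1 h2
  have := hn x h2
  rwa [h1] at this

lemma aux_lim (ν : ℝ) (φ : ℕ → ℝ → ℝ) (hm : ∀ n, MemLp (φ n) 2 (volume.restrict (Ioi (0:ℝ))))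
    (hC1 : CauchyInL2 φ) (F : ℝ → ℝ)
    (hF : ∀ x ∈ Ioc (0:ℝ) 1, Tendsto (fun n => x ^ (-ν - 1/2) * φ n x) atTop (𝓝 (F x)))
    (hF0 : Tendsto F (𝓝[>] 0) (𝓝 0)) :
      ∃ φlim : ℝ → ℝ,
        Tendsto (fun n => eLpNorm (fun x => φ n x - φlim x) 2 (volume.restrict (Ioi (0:ℝ))))
          atTop (𝓝 0) ∧
        φlim =o[𝓝[>] 0] fun x : ℝ => x ^ (ν + 1/2) := by
  have : Fact ((1:ENNReal) ≤ 2) := ⟨by norm_num⟩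
  have hcs : CauchySeq (fun n => (hm n).toLp (φ n)) := by
    rw [EMetric.cauchySeq_iff]
    intro ε hε
    obtain ⟨N, hN⟩ := hC1 ε hε
    refine ⟨N, fun m hm' n hn => ?_⟩
    rw [Lp.edist_toLp_toLp]
    exact hN m hm' n hn
  obtain ⟨g, hg⟩ := cauchySeq_tendsto_of_complete hcs
  have hg' : Tendsto (fun n => eLpNorm (φ n - (g : ℝ → ℝ)) 2 (volume.restrict (Ioi (0:ℝ)))) atTop (𝓝 0) := by
    rw [Lp.tendsto_Lp_iff_tendsto_eLpNorm'] at hg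
    refine hg.congr fun n => eLpNorm_congr_ae ?_
    filter_upwards [(hm n).coeFn_toLp] with x hx
    simp [hx]
  obtain ⟨ns, hns, hae⟩ := (tendstoInMeasure_of_tendsto_eLpNorm (by norm_num)
    (fun n => (hm n).1) (Lp.aestronglyMeasurable g) hg').exists_seq_tendsto_ae
  classical
  let L : ℝ → ℝ := fun x => if x ∈ Ioc (0:ℝ) 1 then x ^ (ν + 1/2) * F x else g x
  have hpt : ∀ x ∈ Ioc (0:ℝ) 1, Tendsto (fun n => φ n x) atTop (𝓝 (x ^ (ν + 1/2) * F x)) := by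
    intro x hx
    refine ((hF x hx).const_mul (x ^ (ν + 1/2))).congr fun n => ?_
    rw [← mul_assoc, ← Real.rpow_add hx.1]
    have : ν + 1/2 + (-ν - 1/2) = 0 := by ring
    rw [this, Real.rpow_zero, one_mul]
  have hLg : (g : ℝ → ℝ) =ᵐ[volume.restrict (Ioi (0:ℝ))] L := by
    filter_upwards [hae] with x hx
    by_cases h : x ∈ Ioc (0:ℝ) 1
    · simp only [L, if_pos h]
      exact tendsto_nhds_unique hx ((hpt x h).comp hns.tendsto_atTop)
    · simp only [L, if_neg h]
  refine ⟨L, hg'.congr fun n => eLpNorm_congr_ae ?_, ?_⟩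
  · filter_upwards [hLg] with x hx
    simp [hx]
  · have h1 : (fun x : ℝ => x ^ (ν + 1/2) * F x) =o[𝓝[>] 0] fun x : ℝ => x ^ (ν + 1/2) * 1 :=
      (isBigO_refl _ _).mul_isLittleO ((isLittleO_one_iff ℝ).2 hF0)
    simp only [mul_one] at h1
    refine h1.congr' ?_ EventuallyEq.rfl
    filter_upwards [Ioc_mem_nhdsGT (zero_lt_one' ℝ)] with x hx
    simp only [L, if_pos hx]

theorem statement8 (ν : ℝ) (hν : 1/2 < ν) (hν1 : ν < 1)
    (φ : ℕ → ℝ → ℝ)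
    (hsmooth : ∀ n, ContDiff ℝ (⊤ : ℕ∞) (φ n))
    (hsupp : ∀ n, HasCompactSupport (φ n))
    (hsupp' : ∀ n, tsupport (φ n) ⊆ Ioi (0:ℝ))
    (hC1 : CauchyInL2 φ)
    (hC2 : CauchyInL2 (fun n x =>
      -(deriv (deriv (φ n)) x) + ((ν ^ 2 - 1/4) / x ^ 2 + x ^ 2) * φ n x)) :
    ∃ F G : ℝ → ℝ,
      TendstoUniformlyOn (fun n x => x ^ (-ν - 1/2) * φ n x) F atTop (Ioc (0:ℝ) 1) ∧
      TendstoUniformlyOn (fun n x => x ^ (-ν + 1/2) * deriv (φ n) x) G atTop (Ioc (0:ℝ) 1) ∧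
      ContinuousOn F (Ioc (0:ℝ) 1) ∧ ContinuousOn G (Ioc (0:ℝ) 1) ∧
      Tendsto F (𝓝[>] 0) (𝓝 0) ∧ Tendsto G (𝓝[>] 0) (𝓝 0) ∧
      ∃ φlim : ℝ → ℝ,
        Tendsto (fun n => eLpNorm (fun x => φ n x - φlim x) 2 (volume.restrict (Ioi (0:ℝ))))
          atTop (𝓝 0) ∧
        φlim =o[𝓝[>] 0] fun x : ℝ => x ^ (ν + 1/2) := by
  have hz : ∀ n, φ n =ᶠ[𝓝 0] fun _ => 0 := fun n =>
    notMem_tsupport_iff_eventuallyEq.1 fun h => lt_irrefl (0:ℝ) (mem_Ioi.1 (hsupp' n h))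
  have hunif : ∀ ε > 0, ∃ N, ∀ m ≥ N, ∀ n ≥ N, ∀ x ∈ Ioc (0:ℝ) 1,
      |x ^ (-ν - 1/2) * φ m x - x ^ (-ν - 1/2) * φ n x| < ε ∧
      |x ^ (-ν + 1/2) * deriv (φ m) x - x ^ (-ν + 1/2) * deriv (φ n) x| < ε := by
    intro ε hε
    have hν' : 0 < 1 - ν := by linarith
    set K := ε * (1 - ν) / 10 with hKdef
    have hK : 0 < K := by positivity
    obtain ⟨N1, hN1⟩ := hC1 (ENNReal.ofReal K) (by simpa using hK)
    obtain ⟨N2, hN2⟩ := hC2 (ENNReal.ofReal K) (by simpa using hK)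
    refine ⟨max N1 N2, fun m hm n hn x hx => ?_⟩
    have d1 : deriv (fun x => φ m x - φ n x) = fun x => deriv (φ m) x - deriv (φ n) x := by
      ext y
      exact deriv_fun_sub ((hsmooth m).differentiable (by simp) y)
        ((hsmooth n).differentiable (by simp) y)
    have d2 : deriv (fun x => deriv (φ m) x - deriv (φ n) x)
        = fun x => deriv (deriv (φ m)) x - deriv (deriv (φ n)) x := by
      ext y
      exact deriv_fun_sub
        (((contDiff_infty_iff_deriv.1 (hsmooth m)).2).differentiable (by simp) y)
        (((contDiff_infty_iff_deriv.1 (hsmooth n)).2).differentiable (by simp) y)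
    have k := aux_key ν hν hν1 (fun x => φ m x - φ n x) ((hsmooth m).sub (hsmooth n))
      (by filter_upwards [hz m, hz n] with y a b; simp [a, b]) K hK.le
      (hN1 m (le_of_max_le_left hm) n (le_of_max_le_left hn)).le
      (by
        rw [d1, d2]
        refine le_of_eq_of_le ?_ (hN2 m (le_of_max_le_right hm) n (le_of_max_le_right hn)).le
        congr 1
        ext y
        ring) x hx
    rw [d1] at k
    have e : 5 / (1 - ν) * K = ε / 2 := by rw [hKdef]; field_simp; norm_num
    rw [e] at k
    rw [← mul_sub, ← mul_sub]
    exact ⟨k.1.trans_lt (by linarith), k.2.trans_lt (by linarith)⟩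
  have hrc : ∀ p : ℝ, ContinuousOn (fun x : ℝ => x ^ p) (Ioc (0:ℝ) 1) := fun p x hx =>
    (Real.continuousAt_rpow_const _ _ (Or.inl hx.1.ne')).continuousWithinAt
  obtain ⟨F, hF1, hF2, hF3⟩ := aux_unif (fun n x => x ^ (-ν - 1/2) * φ n x)
    (fun n => (hrc _).mul (hsmooth n).continuous.continuousOn)
    (fun n => by
      filter_upwards [(hz n).filter_mono nhdsWithin_le_nhds] with x hx
      simp [hx])
    (fun ε hε => by
      obtain ⟨N, hN⟩ := hunif ε hε
      exact ⟨N, fun m hm n hn x hx => (hN m hm n hn x hx).1⟩)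
  obtain ⟨G, hG1, hG2, hG3⟩ := aux_unif (fun n x => x ^ (-ν + 1/2) * deriv (φ n) x)
    (fun n => (hrc _).mul
      (contDiff_infty_iff_deriv.1 (hsmooth n)).2.continuous.continuousOn)
    (fun n => by
      filter_upwards [(hz n).deriv.filter_mono nhdsWithin_le_nhds] with x hx
      simp [hx])
    (fun ε hε => by
      obtain ⟨N, hN⟩ := hunif ε hε
      exact ⟨N, fun m hm n hn x hx => (hN m hm n hn x hx).2⟩)
  exact ⟨F, G, hF1, hG1, hF2, hG2, hF3, hG3, aux_lim ν φ
    (fun n => ((hsmooth n).continuous.memLp_of_hasCompactSupport (hsupp n)).restrict _)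
    hC1 F (fun x hx => hF1.tendsto_at hx) hF3⟩
end

section
/- Let −1/2 < α < 1/2. Let (φ_{1,n}) and (φ_{2,n}) be sequences of smooth complex functions on (0,∞), each with compact support contained in (0,∞), such that the four sequences (φ_{1,n}), (φ_{2,n}), (D₁φ_{1,n}) and (D₂φ_{2,n}) are all Cauchy in L²(0,∞). Then the sequences of functions x ↦ x^{−α}·φ_{1,n}(x) and x ↦ x^{α}·φ_{2,n}(x) converge uniformly on (0,1], and their uniform limits extend to continuous functions on [0,1] that vanish at x = 0. -/
open MeasureTheory Set Filter Topology

/-- A sequence of complex functions is Cauchy in `L²(0,∞)`. -/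
def CauchyInL2C (f : ℕ → ℝ → ℂ) : Prop :=
  ∀ ε : ENNReal, 0 < ε → ∃ N : ℕ, ∀ m ≥ N, ∀ n ≥ N,
    eLpNorm (fun x => f m x - f n x) 2 (volume.restrict (Ioi (0:ℝ))) < ε

/-- `D₁φ = (-φ' + (α/x - x)·φ)/√2`. -/
noncomputable def D1 (α : ℝ) (f : ℝ → ℂ) : ℝ → ℂ :=
  fun x => (-(deriv f x) + ((α / x - x : ℝ) : ℂ) * f x) / (Real.sqrt 2 : ℂ)

/-- `D₂φ = (φ' + (α/x - x)·φ)/√2`. -/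
noncomputable def D2 (α : ℝ) (f : ℝ → ℂ) : ℝ → ℂ :=
  fun x => (deriv f x + ((α / x - x : ℝ) : ℂ) * f x) / (Real.sqrt 2 : ℂ)

theorem weight_finite (β : ℝ) (hβ : -(1/2) < β) :
    eLpNorm (fun t : ℝ => ((t ^ β : ℝ) : ℂ)) 2 (volume.restrict (Ioc (0:ℝ) 1)) < ⊤ := by
  have hm : Measurable (fun t : ℝ => ((t ^ β : ℝ) : ℂ)) := by fun_prop
  have : MemLp (fun t : ℝ => ((t ^ β : ℝ) : ℂ)) 2 (volume.restrict (Ioc (0:ℝ) 1)) := by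
    rw [memLp_two_iff_integrable_sq_norm hm.aestronglyMeasurable]
    have h := (intervalIntegral.intervalIntegrable_rpow' (a := 0) (b := 1) (r := β + β)
      (by linarith)).1
    refine h.congr ?_
    filter_upwards [ae_restrict_mem measurableSet_Ioc] with t ht
    rw [Complex.norm_real, Real.norm_of_nonneg (Real.rpow_nonneg ht.1.le _), sq,
      Real.rpow_add ht.1]
  exact this.2

theorem eventually_zero (f : ℝ → ℂ) (hs : tsupport f ⊆ Ioi (0:ℝ)) : f =ᶠ[𝓝 0] 0 :=
  notMem_tsupport_iff_eventuallyEq.1 fun h => lt_irrefl (0:ℝ) (mem_Ioi.1 (hs h))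

theorem u_contDiff (β : ℝ) (f : ℝ → ℂ) (hf : ContDiff ℝ (⊤ : ℕ∞) f)
    (hs : tsupport f ⊆ Ioi (0:ℝ)) :
    ContDiff ℝ 1 (fun x : ℝ => ((x ^ β : ℝ) : ℂ) * f x) := by
  rw [contDiff_iff_contDiffAt]
  intro x
  by_cases hx : x = 0
  · subst hx
    have : (fun x : ℝ => ((x ^ β : ℝ) : ℂ) * f x) =ᶠ[𝓝 0] fun _ => 0 := by
      filter_upwards [eventually_zero f hs] with x hx
      simp [hx]
    exact contDiffAt_const.congr_of_eventuallyEq this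
  · have h1 : ContDiffAt ℝ 1 (fun x : ℝ => x ^ β) x := Real.contDiffAt_rpow_const_of_ne hx
    exact (Complex.ofRealCLM.contDiff.contDiffAt.comp x h1).mul
      ((hf.of_le (by exact_mod_cast le_top)).contDiffAt)

theorem pointwise_bound (β : ℝ) (f g : ℝ → ℂ) (hf : ContDiff ℝ (⊤ : ℕ∞) f)
    (hs : tsupport f ⊆ Ioi (0:ℝ)) (hg : Measurable g)
    (h : ∀ x > 0, deriv f x + ((β / x : ℝ) : ℂ) * f x = g x) (x : ℝ) (hx : x ∈ Icc (0:ℝ) 1) :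
    ‖((x ^ β : ℝ) : ℂ) * f x‖ₑ ≤
      eLpNorm (fun t : ℝ => ((t ^ β : ℝ) : ℂ)) 2 (volume.restrict (Ioc (0:ℝ) 1)) *
      eLpNorm g 2 (volume.restrict (Ioc (0:ℝ) 1)) := by
  have hu := u_contDiff β f hf hs
  set u : ℝ → ℂ := fun x : ℝ => ((x ^ β : ℝ) : ℂ) * f x with hudef
  have hu0 : u 0 = 0 := by
    have : f 0 = 0 := (eventually_zero f hs).self_of_nhds
    simp [hudef, this]
  have hderiv : ∀ t > 0, deriv u t = ((t ^ β : ℝ) : ℂ) * g t := by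
    intro t ht
    have h1 := (Real.hasDerivAt_rpow_const (p := β) (Or.inl ht.ne')).ofReal_comp
    have h2 := (hf.differentiable (by simp) t).hasDerivAt
    have h3 := (h1.mul h2).deriv
    have : deriv u t = _ := h3
    rw [this, ← h t ht, Real.rpow_sub_one ht.ne']
    push_cast
    ring
  have hint : ∫ t in (0:ℝ)..x, deriv u t = u x := by
    rw [intervalIntegral.integral_deriv_eq_sub
      (fun t _ => hu.differentiable (by simp) t)
      ((hu.continuous_deriv le_rfl).intervalIntegrable _ _), hu0, sub_zero]
  change ‖u x‖ₑ ≤ _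
  rw [← hint, intervalIntegral.integral_of_le hx.1]
  refine (enorm_integral_le_lintegral_enorm _).trans ?_
  refine (lintegral_mono_set (Ioc_subset_Ioc_right hx.2)).trans ?_
  have hm : Measurable (fun t : ℝ => ((t ^ β : ℝ) : ℂ)) := by fun_prop
  have hold := eLpNorm_smul_le_mul_eLpNorm (p := 2) (q := 2) (r := 1)
    (μ := volume.restrict (Ioc (0:ℝ) 1)) (f := g) (φ := fun t : ℝ => ((t ^ β : ℝ) : ℂ))
    hg.aestronglyMeasurable hm.aestronglyMeasurable
  refine le_trans (le_of_eq ?_) hold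
  rw [eLpNorm_one_eq_lintegral_enorm]
  refine setLIntegral_congr_fun measurableSet_Ioc fun t ht => ?_
  simp only [hderiv t ht.1, Pi.smul_apply', smul_eq_mul]

theorem pointwise_bound2 (β : ℝ) (c : ℂ) (hc : ‖c‖ = 1) (f d : ℝ → ℂ)
    (hf : ContDiff ℝ (⊤ : ℕ∞) f)
    (hs : tsupport f ⊆ Ioi (0:ℝ)) (hd : Measurable d)
    (h : ∀ x > 0, deriv f x + ((β / x : ℝ) : ℂ) * f x =
      c * ((Real.sqrt 2 : ℂ) * d x + (x : ℂ) * f x)) (x : ℝ) (hx : x ∈ Icc (0:ℝ) 1) :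
    ‖((x ^ β : ℝ) : ℂ) * f x‖ₑ ≤
      eLpNorm (fun t : ℝ => ((t ^ β : ℝ) : ℂ)) 2 (volume.restrict (Ioc (0:ℝ) 1)) *
      (2 * eLpNorm d 2 (volume.restrict (Ioi (0:ℝ))) +
        eLpNorm f 2 (volume.restrict (Ioi (0:ℝ)))) := by
  have hfm : Measurable f := hf.continuous.measurable
  refine (pointwise_bound β f _ hf hs (by fun_prop) h x hx).trans ?_
  gcongr
  have hsplit : (fun x : ℝ => c * ((Real.sqrt 2 : ℂ) * d x + (x : ℂ) * f x)) =
      (fun x => (c * (Real.sqrt 2 : ℂ)) • d x) + fun x : ℝ => c * ((x : ℂ) * f x) := by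
    funext x; simp [smul_eq_mul]; ring
  rw [hsplit]
  refine (eLpNorm_add_le (by fun_prop) (by fun_prop) (by norm_num)).trans ?_
  refine add_le_add ?_ ?_
  · have : eLpNorm (fun x => (c * (Real.sqrt 2 : ℂ)) • d x) 2 (volume.restrict (Ioc (0:ℝ) 1))
        ≤ ENNReal.ofReal 2 * eLpNorm d 2 (volume.restrict (Ioc (0:ℝ) 1)) := by
      refine eLpNorm_le_mul_eLpNorm_of_ae_le_mul (ae_of_all _ fun x => ?_) 2
      rw [norm_smul, norm_mul, hc, one_mul, Complex.norm_real,
        Real.norm_of_nonneg (Real.sqrt_nonneg _)]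
      gcongr
      rw [Real.sqrt_le_left] <;> norm_num
    refine this.trans ?_
    rw [show ENNReal.ofReal 2 = 2 by simp]
    gcongr
    exact Ioc_subset_Ioi_self
  · refine le_trans (eLpNorm_mono_ae (g := f) ?_)
      (eLpNorm_mono_measure _ (Measure.restrict_mono Ioc_subset_Ioi_self le_rfl))
    filter_upwards [ae_restrict_mem measurableSet_Ioc] with t ht
    rw [norm_mul, hc, one_mul, norm_mul, Complex.norm_real, Real.norm_of_nonneg ht.1.le]
    exact mul_le_of_le_one_left (norm_nonneg _) ht.2

theorem main_aux (β : ℝ) (hβ : -(1/2) < β) (c : ℂ) (hc : ‖c‖ = 1) (φ d : ℕ → ℝ → ℂ)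
    (hf : ∀ n, ContDiff ℝ (⊤ : ℕ∞) (φ n))
    (hs : ∀ n, tsupport (φ n) ⊆ Ioi (0:ℝ)) (hd : ∀ n, Measurable (d n))
    (h : ∀ n, ∀ x > 0, deriv (φ n) x + ((β / x : ℝ) : ℂ) * φ n x =
      c * ((Real.sqrt 2 : ℂ) * d n x + (x : ℂ) * φ n x))
    (hC : CauchyInL2C φ) (hD : CauchyInL2C d) :
    ∃ F : ℝ → ℂ,
      TendstoUniformlyOn (fun n x => ((x ^ β : ℝ) : ℂ) * φ n x) F atTop (Ioc (0:ℝ) 1) ∧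
      ContinuousOn F (Icc (0:ℝ) 1) ∧ F 0 = 0 := by
  have hW := weight_finite β hβ
  have hb : ∀ m n, ∀ x ∈ Icc (0:ℝ) 1,
      ‖((x ^ β : ℝ) : ℂ) * φ m x - ((x ^ β : ℝ) : ℂ) * φ n x‖ₑ ≤
      eLpNorm (fun t : ℝ => ((t ^ β : ℝ) : ℂ)) 2 (volume.restrict (Ioc (0:ℝ) 1)) *
      (2 * eLpNorm (fun x => d m x - d n x) 2 (volume.restrict (Ioi (0:ℝ))) +
        eLpNorm (fun x => φ m x - φ n x) 2 (volume.restrict (Ioi (0:ℝ)))) := by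
    intro m n x hx
    rw [← mul_sub]
    refine pointwise_bound2 β c hc (fun x => φ m x - φ n x) (fun x => d m x - d n x)
      ((hf m).sub (hf n)) ?_ ((hd m).sub (hd n)) ?_ x hx
    · exact (tsupport_sub (φ m) (φ n)).trans (union_subset (hs m) (hs n))
    · intro x hx
      have e : deriv (fun x => φ m x - φ n x) x = deriv (φ m) x - deriv (φ n) x :=
        deriv_fun_sub ((hf m).differentiable (by simp) x) ((hf n).differentiable (by simp) x)
      rw [e]
      linear_combination h m x hx - h n x hx
  generalize eLpNorm (fun t : ℝ => ((t ^ β : ℝ) : ℂ)) 2 (volume.restrict (Ioc (0:ℝ) 1)) = W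
    at hW hb
  have hU : UniformCauchySeqOn (fun n x => ((x ^ β : ℝ) : ℂ) * φ n x) atTop (Icc (0:ℝ) 1) := by
    rw [Metric.uniformCauchySeqOn_iff]
    intro ε hε
    have hδ : 0 < ENNReal.ofReal ε / (3 * (W + 1)) := by
      apply ENNReal.div_pos
      · simpa using hε
      · exact ENNReal.mul_ne_top (by norm_num) (by simp [hW.ne])
    obtain ⟨N1, h1⟩ := hC _ hδ
    obtain ⟨N2, h2⟩ := hD _ hδ
    refine ⟨max N1 N2, fun m hm n hn x hx => ?_⟩
    have a1 := h1 m (le_of_max_le_left hm) n (le_of_max_le_left hn)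
    have a2 := h2 m (le_of_max_le_right hm) n (le_of_max_le_right hn)
    generalize hδe : ENNReal.ofReal ε / (3 * (W + 1)) = δ at hδ a1 a2
    rw [dist_eq_norm]
    have hfin : (3 * (W + 1)) ≠ ⊤ := ENNReal.mul_ne_top (by norm_num) (by simp [hW.ne])
    have key : ‖((x ^ β : ℝ) : ℂ) * φ m x - ((x ^ β : ℝ) : ℂ) * φ n x‖ₑ
        < ENNReal.ofReal ε := by
      have e : (W + 1) * (2 * δ + δ) = ENNReal.ofReal ε := by
        rw [← hδe, show ∀ a b : ENNReal, a * (2 * b + b) = 3 * a * b by intros; ring]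
        exact ENNReal.mul_div_cancel (by simp) hfin
      rw [← e]
      refine (hb m n x hx).trans_lt ?_
      calc _ ≤ (W + 1) * (2 * eLpNorm (fun x => d m x - d n x) 2 (volume.restrict (Ioi (0:ℝ))) +
        eLpNorm (fun x => φ m x - φ n x) 2 (volume.restrict (Ioi (0:ℝ)))) := by
              gcongr; exact le_self_add
        _ < _ := by
          apply ENNReal.mul_lt_mul_right (by simp) (by simp [hW.ne])
          apply ENNReal.add_lt_add_of_le_of_lt _ _ a1
          · exact ENNReal.mul_ne_top (by norm_num) a2.ne_top
          · gcongr
    rw [← ofReal_norm_eq_enorm] at key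
    exact (ENNReal.ofReal_lt_ofReal_iff hε).1 key
  have hp : ∀ x, ∃ l, x ∈ Icc (0:ℝ) 1 →
      Tendsto (fun n => ((x ^ β : ℝ) : ℂ) * φ n x) atTop (𝓝 l) := by
    intro x
    by_cases hx : x ∈ Icc (0:ℝ) 1
    · obtain ⟨l, hl⟩ := cauchySeq_tendsto_of_complete (hU.cauchySeq hx)
      exact ⟨l, fun _ => hl⟩
    · exact ⟨0, fun h => absurd h hx⟩
  choose F hF using hp
  have hT := hU.tendstoUniformlyOn_of_tendsto (fun x hx => hF x hx)
  refine ⟨F, hT.mono Ioc_subset_Icc_self, hT.continuousOn ?_, ?_⟩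
  · exact Frequently.of_forall fun n => (u_contDiff β (φ n) (hf n) (hs n)).continuous.continuousOn
  · refine tendsto_nhds_unique (hF 0 (by simp)) ?_
    have : ∀ n, φ n 0 = 0 := fun n => (eventually_zero _ (hs n)).self_of_nhds
    simp [this]

theorem statement9 (α : ℝ) (hα1 : -(1/2) < α) (hα2 : α < 1/2)
    (φ₁ φ₂ : ℕ → ℝ → ℂ)
    (hsmooth1 : ∀ n, ContDiff ℝ (⊤ : ℕ∞) (φ₁ n))
    (hsmooth2 : ∀ n, ContDiff ℝ (⊤ : ℕ∞) (φ₂ n))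
    (hsupp1 : ∀ n, HasCompactSupport (φ₁ n))
    (hsupp2 : ∀ n, HasCompactSupport (φ₂ n))
    (hsupp1' : ∀ n, tsupport (φ₁ n) ⊆ Ioi (0:ℝ))
    (hsupp2' : ∀ n, tsupport (φ₂ n) ⊆ Ioi (0:ℝ))
    (hC1 : CauchyInL2C φ₁) (hC2 : CauchyInL2C φ₂)
    (hC3 : CauchyInL2C (fun n => D1 α (φ₁ n)))
    (hC4 : CauchyInL2C (fun n => D2 α (φ₂ n))) :
    ∃ F G : ℝ → ℂ,
      TendstoUniformlyOn (fun n x => ((x ^ (-α) : ℝ) : ℂ) * φ₁ n x) F atTop (Ioc (0:ℝ) 1) ∧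
      TendstoUniformlyOn (fun n x => ((x ^ α : ℝ) : ℂ) * φ₂ n x) G atTop (Ioc (0:ℝ) 1) ∧
      ContinuousOn F (Icc (0:ℝ) 1) ∧ ContinuousOn G (Icc (0:ℝ) 1) ∧
      F 0 = 0 ∧ G 0 = 0 := by
  have hs2 : (Real.sqrt 2 : ℂ) ≠ 0 := by simp
  obtain ⟨F, f1, f2, f3⟩ := main_aux (-α) (by linarith) (-1) (by simp) φ₁ _ hsmooth1 hsupp1'
    (fun n => by
      have := (hsmooth1 n).continuous.measurable
      have := measurable_deriv (φ₁ n)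
      unfold D1; fun_prop)
    (fun n x hx => by
      unfold D1
      rw [mul_div_cancel₀ _ hs2]
      push_cast
      ring) hC1 hC3
  obtain ⟨G, g1, g2, g3⟩ := main_aux α hα1 1 (by simp) φ₂ _ hsmooth2 hsupp2'
    (fun n => by
      have := (hsmooth2 n).continuous.measurable
      have := measurable_deriv (φ₂ n)
      unfold D2; fun_prop)
    (fun n x hx => by
      unfold D2
      rw [mul_div_cancel₀ _ hs2]
      push_cast
      ring) hC2 hC4
  exact ⟨F, G, f1, g1, f2, g2, f3, g3⟩
end

section
/- Let 0 < ν < 1 and let θ ∈ ℝ satisfy θ < −Γ(1−ν)·Γ((1+ν)/2) / (Γ(1+ν)·Γ((1−ν)/2)), where Γ is the real Gamma function. Then there exists λ < 0 such that Γ(ν/2 + 1/2 − λ/4) / Γ(−ν/2 + 1/2 − λ/4) = (Γ(ν)/Γ(−ν))·θ. -/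
lemma ratio_bound (ν x : ℝ) (h0 : 0 < ν) (h1 : ν < 1) (hx : 1 ≤ x) :
    (x + ν) ^ ν - 1 ≤ Real.Gamma (x + ν) / Real.Gamma x := by
  have hx0 : 0 < x := by linarith
  have hy : 0 < x + ν := by linarith
  have hG := Real.Gamma_pos_of_pos hx0
  have hGy := Real.Gamma_pos_of_pos hy
  have key := Real.Gamma_mul_add_mul_le_rpow_Gamma_mul_rpow_Gamma (s := x + ν) (t := x + ν + 1)
    (a := ν) (b := 1 - ν) hy (by linarith) h0 (by linarith) (by ring)
  have e : ν * (x + ν) + (1 - ν) * (x + ν + 1) = x + 1 := by ring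
  rw [e, Real.Gamma_add_one hx0.ne', Real.Gamma_add_one hy.ne',
    Real.mul_rpow hy.le hGy.le] at key
  have e2 : Real.Gamma (x + ν) ^ ν * ((x + ν) ^ (1 - ν) * Real.Gamma (x + ν) ^ (1 - ν))
      = (x + ν) ^ (1 - ν) * Real.Gamma (x + ν) := by
    have : Real.Gamma (x + ν) ^ ν * Real.Gamma (x + ν) ^ (1 - ν) = Real.Gamma (x + ν) := by
      rw [← Real.rpow_add hGy]; simp
    linear_combination (x + ν) ^ (1 - ν) * this
  rw [e2] at key
  have hp : 1 ≤ (x + ν) ^ (1 - ν) := Real.one_le_rpow (by linarith) (by linarith)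
  have hm : (x + ν) ^ ν * (x + ν) ^ (1 - ν) = x + ν := by
    rw [← Real.rpow_add hy]; simp
  rw [le_div_iff₀ hG]
  have h3 : ((x + ν) ^ ν - 1) * (x + ν) ^ (1 - ν) ≤ x := by
    rw [sub_mul, hm]; linarith
  have hp0 : 0 < (x + ν) ^ (1 - ν) := by linarith
  refine le_of_mul_le_mul_left ?_ hp0
  calc _ = (((x + ν) ^ ν - 1) * (x + ν) ^ (1 - ν)) * Real.Gamma x := by ring
    _ ≤ x * Real.Gamma x := by gcongr
    _ ≤ _ := key

theorem statement16 (ν θ : ℝ) (hν0 : 0 < ν) (hν1 : ν < 1)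
    (hθ : θ < -(Real.Gamma (1 - ν) * Real.Gamma ((1 + ν) / 2)) /
      (Real.Gamma (1 + ν) * Real.Gamma ((1 - ν) / 2))) :
    ∃ lam : ℝ, lam < 0 ∧
      Real.Gamma (ν / 2 + 1/2 - lam / 4) / Real.Gamma (-ν / 2 + 1/2 - lam / 4) =
        (Real.Gamma ν / Real.Gamma (-ν)) * θ := by
  have hA : 0 < Real.Gamma (1 - ν) := Real.Gamma_pos_of_pos (by linarith)
  have hB : 0 < Real.Gamma (1 + ν) := Real.Gamma_pos_of_pos (by linarith)
  have hC : 0 < Real.Gamma ((1 - ν) / 2) := Real.Gamma_pos_of_pos (by linarith)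
  have hD : 0 < Real.Gamma ν := Real.Gamma_pos_of_pos hν0
  have e1 : Real.Gamma (1 + ν) = ν * Real.Gamma ν := by
    rw [add_comm, Real.Gamma_add_one hν0.ne']
  have e2 : Real.Gamma (1 - ν) = -ν * Real.Gamma (-ν) := by
    rw [← Real.Gamma_add_one (by linarith : -ν ≠ 0)]; congr 1; ring
  have hE : Real.Gamma (-ν) ≠ 0 := by
    intro h; rw [h] at e2; simp at e2; linarith
  have hc : Real.Gamma ν / Real.Gamma (-ν) * θ = -(Real.Gamma (1 + ν) * θ) / Real.Gamma (1 - ν) := by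
    rw [e1, e2]; field_simp
  rw [hc]
  set c := -(Real.Gamma (1 + ν) * θ) / Real.Gamma (1 - ν) with hcdef
  have hlow : Real.Gamma ((1 + ν) / 2) / Real.Gamma ((1 - ν) / 2) < c := by
    rw [hcdef, div_lt_div_iff₀ hC hA]
    rw [lt_div_iff₀ (by positivity)] at hθ
    linarith
  let f : ℝ → ℝ := fun s => Real.Gamma (ν / 2 + 1/2 + s) / Real.Gamma (-ν / 2 + 1/2 + s)
  obtain ⟨s, hs1, hs2⟩ : ∃ s : ℝ, 1 ≤ s ∧ c ≤ f s := by
    have ht := (tendsto_rpow_atTop hν0).eventually_ge_atTop (c + 1)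
    obtain ⟨y, hy, hy3⟩ := (ht.and (Filter.eventually_ge_atTop 3)).exists
    refine ⟨y - (ν / 2 + 1/2), by linarith, ?_⟩
    have := ratio_bound ν (y - ν) hν0 hν1 (by linarith)
    have a1 : ν / 2 + 1/2 + (y - (ν / 2 + 1/2)) = y := by ring
    have a2 : -ν / 2 + 1/2 + (y - (ν / 2 + 1/2)) = y - ν := by ring
    simp only [f, a1, a2]
    rw [sub_add_cancel] at this
    linarith
  have hcont : ContinuousOn f (Set.Icc 0 s) := by
    have hg := Real.differentiableOn_Gamma_Ioi.continuousOn
    refine ContinuousOn.div (hg.comp (by fun_prop) ?_) (hg.comp (by fun_prop) ?_) ?_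
    · intro t ht; have := ht.1; simp only [Set.mem_Ioi]; linarith
    · intro t ht; have := ht.1; simp only [Set.mem_Ioi]; linarith
    · intro t ht; have := ht.1; exact (Real.Gamma_pos_of_pos (by linarith)).ne'
  have hf0 : f 0 < c := by
    have a1 : ν / 2 + 1/2 + 0 = (1 + ν) / 2 := by ring
    have a2 : -ν / 2 + 1/2 + 0 = (1 - ν) / 2 := by ring
    simp only [f, a1, a2]; exact hlow
  obtain ⟨t, ht, hft⟩ := intermediate_value_Icc (by linarith : (0:ℝ) ≤ s) hcont ⟨hf0.le, hs2⟩
  have ht0 : 0 < t := by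
    rcases ht.1.eq_or_lt with h | h
    · rw [← h] at hft; linarith
    · exact h
  refine ⟨-4 * t, by linarith, ?_⟩
  rw [← hft]
  simp only [f]
  congr 2 <;> ring
end

section
/- For every t > 0 and every κ ∈ ℝ, the series Σ_{m=1}^∞ m·(e^{−4t(m+κ)} − e^{−4tm}) converges and 2·Σ_{m=1}^∞ m·(e^{−4t(m+κ)} − e^{−4tm}) = −e^{−2κt}·sinh(2κt)/sinh²(2t). Moreover, for each fixed κ there exist constants C > 0 and t₀ > 0 such that |−e^{−2κt}·sinh(2κt)/sinh²(2t) + κ/(2t) − κ²| ≤ C·t for all t ∈ (0,t₀); i.e. the function admits the small-t expansion −(κ/2)·t^{−1} + κ² + O(t). -/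
open Set

lemma aux_num (κ t : ℝ) : Real.exp (-(2 * κ * t)) * Real.sinh (2 * κ * t)
    = (1 - Real.exp (-(4 * κ * t))) / 2 := by
  rw [Real.sinh_eq]
  have h1 : Real.exp (-(2 * κ * t)) * Real.exp (2 * κ * t) = 1 := by
    rw [← Real.exp_add]; simp
  have h2 : Real.exp (-(2 * κ * t)) * Real.exp (-(2 * κ * t)) = Real.exp (-(4 * κ * t)) := by
    rw [← Real.exp_add]; ring_nf
  linear_combination h1 / 2 - h2 / 2

lemma aux_sinh (t : ℝ) : Real.sinh (2 * t) ^ 2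
    = (Real.exp (4 * t) + Real.exp (-(4 * t)) - 2) / 4 := by
  rw [Real.sinh_eq]
  have h1 : Real.exp (-(2 * t)) * Real.exp (2 * t) = 1 := by
    rw [← Real.exp_add]; simp
  have h2 : Real.exp (-(2 * t)) * Real.exp (-(2 * t)) = Real.exp (-(4 * t)) := by
    rw [← Real.exp_add]; ring_nf
  have h3 : Real.exp (2 * t) * Real.exp (2 * t) = Real.exp (4 * t) := by
    rw [← Real.exp_add]; ring_nf
  linear_combination h3 / 4 + h2 / 4 - h1 / 2

theorem statement17 (κ : ℝ) :
    (∀ t : ℝ, 0 < t → ∃ S : ℝ,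
      HasSum (fun m : ℕ =>
        ((m : ℝ) + 1) *
          (Real.exp (-(4 * t) * (((m : ℝ) + 1) + κ)) - Real.exp (-(4 * t) * ((m : ℝ) + 1)))) S ∧
      2 * S = -(Real.exp (-(2 * κ * t)) * Real.sinh (2 * κ * t) / Real.sinh (2 * t) ^ 2)) ∧
    ∃ C : ℝ, 0 < C ∧ ∃ t₀ : ℝ, 0 < t₀ ∧ ∀ t ∈ Ioo (0:ℝ) t₀,
      |(-(Real.exp (-(2 * κ * t)) * Real.sinh (2 * κ * t) / Real.sinh (2 * t) ^ 2)) +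
          κ / (2 * t) - κ ^ 2| ≤ C * t := by
  constructor
  · intro t ht
    have hq1 : Real.exp (-(4 * t)) < 1 := Real.exp_lt_one_iff.2 (by linarith)
    have hq0 : 0 < Real.exp (-(4 * t)) := Real.exp_pos _
    have hs := hasSum_coe_mul_geometric_of_norm_lt_one (r := Real.exp (-(4 * t)))
      (by rw [Real.norm_eq_abs, abs_of_pos hq0]; exact hq1)
    rw [← hasSum_nat_add_iff' 1] at hs
    have hs2 := hs.mul_left (Real.exp (-(4 * κ * t)) - 1)
    refine ⟨_, hs2.congr_fun ?_, ?_⟩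
    · intro m
      have e1 : Real.exp (-(4 * t) * ((m : ℝ) + 1)) = Real.exp (-(4 * t)) ^ (m + 1) := by
        rw [← Real.exp_nat_mul]; push_cast; ring_nf
      have e2 : Real.exp (-(4 * t) * (((m : ℝ) + 1) + κ))
          = Real.exp (-(4 * t)) ^ (m + 1) * Real.exp (-(4 * κ * t)) := by
        rw [← e1, ← Real.exp_add]; ring_nf
      rw [e1, e2]; push_cast; ring
    · rw [aux_num, aux_sinh]
      have h4 : Real.exp (4 * t) = (Real.exp (-(4 * t)))⁻¹ := by
        rw [← Real.exp_neg]; ring_nf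
      rw [h4]
      generalize Real.exp (-(4 * t)) = q at *
      have h1 : 1 - q ≠ 0 := by linarith
      have h2 : (q⁻¹ + q - 2) / 4 = (1 - q) ^ 2 / (4 * q) := by field_simp; ring
      rw [h2]
      simp
      field_simp
      ring
  · refine ⟨8 * |κ| ^ 3 + 7 * |κ| + 7 * |κ| ^ 2 + 1, by positivity, 1 / (4 * (|κ| + 1)),
      by positivity, ?_⟩
    rintro t ⟨ht, ht2⟩
    have hk := abs_nonneg κ
    rw [lt_div_iff₀ (by positivity)] at ht2
    have hkt : 0 ≤ |κ| * t := by positivity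
    have ht4 : 4 * t ≤ 1 := by nlinarith
    have hkt4 : |κ| * t * 4 ≤ 1 := by nlinarith
    have hs4 : 4 * t ^ 2 ≤ Real.sinh (2 * t) ^ 2 := by
      have := Real.self_le_sinh_iff.2 (show 0 ≤ 2 * t by linarith)
      nlinarith
    have b1 := Real.exp_bound (x := 4 * t) (by rw [abs_of_pos (by linarith)]; exact ht4)
      (n := 4) (by norm_num)
    have b2 := Real.exp_bound (x := -(4 * t))
      (by rw [abs_neg, abs_of_pos (by linarith)]; exact ht4) (n := 4) (by norm_num)
    have b3 := Real.exp_bound (x := -(4 * κ * t))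
      (by rw [abs_neg, abs_mul, abs_mul, abs_of_pos ht]; norm_num; linarith)
      (n := 3) (by norm_num)
    rw [abs_of_pos (by linarith : 0 < 4 * t)] at b1
    rw [abs_neg, abs_of_pos (by linarith : 0 < 4 * t)] at b2
    rw [abs_neg (4 * κ * t), abs_mul (4 * κ), abs_mul 4, abs_of_pos ht] at b3
    norm_num [Finset.sum_range_succ, Nat.factorial] at b1 b2 b3
    have hd : Real.sinh (2 * t) ^ 2 - 4 * t ^ 2 ≤ 7 * t ^ 4 := by
      rw [aux_sinh]
      have c1 := (abs_le.1 b1).2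
      have c2 := (abs_le.1 b2).2
      have : 0 < t ^ 4 := by positivity
      nlinarith
    obtain ⟨R, hR⟩ : ∃ R, R = (1 - Real.exp (-(4 * κ * t))) / 2 - 2 * κ * t + 4 * κ ^ 2 * t ^ 2 :=
      ⟨_, rfl⟩
    have hRb : |R| ≤ 8 * |κ| ^ 3 * t ^ 3 := by
      have : 0 ≤ |κ| ^ 3 * t ^ 3 := by positivity
      obtain ⟨c1, c2⟩ := abs_le.1 b3
      rw [hR, abs_le]
      constructor <;> nlinarith
    rw [aux_num]
    have hN : (1 - Real.exp (-(4 * κ * t))) / 2 = R + 2 * κ * t - 4 * κ ^ 2 * t ^ 2 := by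
      rw [hR]; ring
    rw [hN]
    obtain ⟨d, hdd⟩ : ∃ d, d = Real.sinh (2 * t) ^ 2 - 4 * t ^ 2 := ⟨_, rfl⟩
    have hS : Real.sinh (2 * t) ^ 2 = 4 * t ^ 2 + d := by rw [hdd]; ring
    rw [hS] at hs4 hd ⊢
    have hd0 : 0 ≤ d := by linarith
    have hd7 : d ≤ 7 * t ^ 4 := by linarith
    have hpos : 0 < 4 * t ^ 2 + d := by positivity
    have key : -((R + 2 * κ * t - 4 * κ ^ 2 * t ^ 2) / (4 * t ^ 2 + d)) + κ / (2 * t) - κ ^ 2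
        = (-R + d * (κ / (2 * t) - κ ^ 2)) / (4 * t ^ 2 + d) := by
      field_simp
      ring
    rw [key, abs_div, abs_of_pos hpos, div_le_iff₀ hpos]
    have e1 : |κ / (2 * t) - κ ^ 2| ≤ |κ| / (2 * t) + |κ| ^ 2 := by
      refine (abs_sub _ _).trans ?_
      rw [abs_div, abs_of_pos (by linarith : 0 < 2 * t), abs_pow]
    have e2 : |d * (κ / (2 * t) - κ ^ 2)| ≤ 7 * t ^ 4 * (|κ| / (2 * t) + |κ| ^ 2) := by
      rw [abs_mul, abs_of_nonneg hd0]
      gcongr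
    have e3 : 7 * t ^ 4 * (|κ| / (2 * t) + |κ| ^ 2) = 7 / 2 * |κ| * t ^ 3 + 7 * |κ| ^ 2 * t ^ 3 * t := by
      field_simp
    have e4 : 7 * |κ| ^ 2 * t ^ 3 * t ≤ 7 * |κ| ^ 2 * t ^ 3 * 1 := by
      gcongr; linarith
    have e5 : |-R + d * (κ / (2 * t) - κ ^ 2)| ≤ |R| + |d * (κ / (2 * t) - κ ^ 2)| := by
      refine (abs_add_le _ _).trans ?_
      rw [abs_neg]
    have e6 : (8 * |κ| ^ 3 + 7 * |κ| + 7 * |κ| ^ 2 + 1) * t * (4 * t ^ 2) ≤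
        (8 * |κ| ^ 3 + 7 * |κ| + 7 * |κ| ^ 2 + 1) * t * (4 * t ^ 2 + d) := by
      gcongr
    have p3 : 0 < t ^ 3 := by positivity
    have p4 : 0 ≤ |κ| ^ 3 * t ^ 3 := by positivity
    have p5 : 0 ≤ |κ| ^ 2 * t ^ 3 := by positivity
    have p6 : 0 ≤ |κ| * t ^ 3 := by positivity
    nlinarith
end

section
/- Let 0 < ε < 1/√2 and, for t ∈ (0, π/2), define ψ_t : [0, επ/2) → ℝ by ψ_t(x) = exp(−ε·tan(x/ε)/tan(t/2)). Then: (i) ∫₀^{επ/2} ψ_t(x)² dx ≤ tan(t/2)/2, so this integral tends to 0 as t → 0⁺; and (ii) the improper integral ∫₀^{επ/2} ψ_t(x)·(−ψ_t''(x)) dx converges and the quotient (∫₀^{επ/2} ψ_t(x)·(−ψ_t''(x)) dx) / (∫₀^{επ/2} ψ_t(x)² dx) tends to −∞ as t → 0⁺. -/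
open MeasureTheory Set Filter Topology Real

/-- The boundary state `ψ_t(x) = exp(-ε·tan(x/ε)/tan(t/2))`. -/
noncomputable def boundaryState (ε t x : ℝ) : ℝ :=
  Real.exp (-(ε * Real.tan (x / ε) / Real.tan (t / 2)))

theorem aux_d1 (ε T x : ℝ) (h0 : 0 < ε) (hx : x ∈ Ioo (-(ε * π / 2)) (ε * π / 2)) :
    HasDerivAt (fun x => Real.tan (x / ε)) ((1 + Real.tan (x / ε) ^ 2) / ε) x := by
  have hm : x / ε ∈ Ioo (-(π/2)) (π/2) := by
    constructor
    · rw [lt_div_iff₀ h0]; linarith [hx.1]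
    · rw [div_lt_iff₀ h0]; linarith [hx.2]
  have hc := Real.cos_pos_of_mem_Ioo hm
  have h := (Real.hasDerivAt_tan hc.ne').comp x ((hasDerivAt_id x).div_const ε)
  refine h.congr_deriv ?_
  rw [one_div, ← Real.inv_one_add_tan_sq hc.ne', inv_inv]
  simp [div_eq_mul_inv]

theorem aux_d2 (ε a x : ℝ) (h0 : 0 < ε) (hx : x ∈ Ioo (-(ε * π / 2)) (ε * π / 2)) :
    HasDerivAt (fun x => Real.exp (-(ε * Real.tan (x / ε) * a)))
      (-a * (1 + Real.tan (x / ε) ^ 2) * Real.exp (-(ε * Real.tan (x / ε) * a))) x := by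
  have h := ((((aux_d1 ε a x h0 hx).const_mul ε).mul_const a).neg).exp
  refine h.congr_deriv ?_
  simp only [Pi.neg_apply]
  field_simp

theorem aux_dd (ε a x : ℝ) (h0 : 0 < ε) (hx : x ∈ Ioo (-(ε * π / 2)) (ε * π / 2)) :
    deriv (deriv (fun x => Real.exp (-(ε * Real.tan (x / ε) * a)))) x =
      (a ^ 2 * (1 + Real.tan (x / ε) ^ 2) ^ 2
        - 2 * a / ε * (Real.tan (x / ε) * (1 + Real.tan (x / ε) ^ 2)))
        * Real.exp (-(ε * Real.tan (x / ε) * a)) := by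
  have he : deriv (fun x => Real.exp (-(ε * Real.tan (x / ε) * a))) =ᶠ[𝓝 x]
      fun x => (-a * (1 + Real.tan (x / ε) ^ 2) * Real.exp (-(ε * Real.tan (x / ε) * a))) := by
    filter_upwards [isOpen_Ioo.mem_nhds hx] with y hy
    exact (aux_d2 ε a y h0 hy).deriv
  rw [he.deriv_eq]
  have h := ((((aux_d1 ε a x h0 hx).pow 2).const_add 1).const_mul (-a)).mul (aux_d2 ε a x h0 hx)
  refine HasDerivAt.deriv (h.congr_deriv ?_)
  simp
  field_simp
  ring

theorem aux_ct (ε : ℝ) (h0 : 0 < ε) :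
    ContinuousOn (fun x => Real.tan (x / ε)) (Ioo 0 (ε * π / 2)) := by
  intro x hx
  exact (aux_d1 ε 0 x h0 ⟨by linarith [hx.1, hx.2], hx.2⟩).continuousAt.continuousWithinAt

theorem aux_tan (ε x : ℝ) (h0 : 0 < ε) (hx : x ∈ Ioo 0 (ε * π / 2)) :
    x ≤ ε * Real.tan (x / ε) := by
  have h1 : 0 < x / ε := div_pos hx.1 h0
  have h2 : x / ε < π / 2 := by rw [div_lt_iff₀ h0]; linarith [hx.2]
  have := (Real.lt_tan h1 h2).le
  rw [div_le_iff₀ h0] at this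
  linarith

theorem aux_sq (z : ℝ) : Real.exp z ^ 2 = Real.exp (2 * z) := by
  rw [← Real.exp_nat_mul]; norm_num

/-- (i) integrability, positivity and the upper bound of the squared norm -/
theorem aux_norm (ε a : ℝ) (h0 : 0 < ε) (ha : 0 < a) :
    0 < (∫ x in Ioo (0:ℝ) (ε * π / 2), Real.exp (-(ε * Real.tan (x / ε) * a)) ^ 2) ∧
    (∫ x in Ioo (0:ℝ) (ε * π / 2), Real.exp (-(ε * Real.tan (x / ε) * a)) ^ 2) ≤ 1 / (2 * a) := by
  have hL : 0 < ε * π / 2 := by positivity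
  have hle : ∀ x ∈ Ioo (0:ℝ) (ε * π / 2),
      Real.exp (-(ε * Real.tan (x / ε) * a)) ^ 2 ≤ Real.exp ((-(2 * a)) * x) := by
    intro x hx
    rw [aux_sq, Real.exp_le_exp]
    nlinarith [aux_tan ε x h0 hx]
  have hI : IntegrableOn (fun x => Real.exp ((-(2 * a)) * x)) (Ioi 0) :=
    integrableOn_exp_mul_Ioi (by linarith) 0
  have hsub : Ioo (0:ℝ) (ε * π / 2) ⊆ Ioi 0 := fun x hx => hx.1
  have hcont : ContinuousOn (fun x => Real.exp (-(ε * Real.tan (x / ε) * a)) ^ 2)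
      (Ioo 0 (ε * π / 2)) := by
    have := aux_ct ε h0
    fun_prop
  have hint : IntegrableOn (fun x => Real.exp (-(ε * Real.tan (x / ε) * a)) ^ 2)
      (Ioo 0 (ε * π / 2)) := by
    refine Integrable.mono' (hI.mono_set hsub) (hcont.aestronglyMeasurable measurableSet_Ioo) ?_
    refine (ae_restrict_iff' measurableSet_Ioo).2 (Eventually.of_forall fun x hx => ?_)
    rw [Real.norm_of_nonneg (by positivity)]
    exact hle x hx
  constructor
  · rw [setIntegral_pos_iff_support_of_nonneg_ae (Eventually.of_forall fun x => by
      simp only [Pi.zero_apply]; positivity) hint]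
    have : Function.support (fun x => Real.exp (-(ε * Real.tan (x / ε) * a)) ^ 2) = univ := by
      ext x; simp
    rw [this, univ_inter, Real.volume_Ioo]
    simpa using hL
  · calc _ ≤ ∫ x in Ioo (0:ℝ) (ε * π / 2), Real.exp ((-(2 * a)) * x) :=
          setIntegral_mono_on hint (hI.mono_set hsub) measurableSet_Ioo hle
      _ ≤ ∫ x in Ioi (0:ℝ), Real.exp ((-(2 * a)) * x) :=
          setIntegral_mono_set hI (Eventually.of_forall fun x => (Real.exp_pos _).le)
            (HasSubset.Subset.eventuallyLE hsub)
      _ = 1 / (2 * a) := by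
          rw [integral_exp_mul_Ioi (by linarith)]
          simp [neg_div_neg_eq]

theorem aux_bound (c y K : ℝ) (hc : 0 < c) (hy : 0 ≤ y) (hK : 0 ≤ K) :
    K * (1 + y ^ 2) ^ 2 * Real.exp (-(c * y)) ≤ K * (2 + 48 / c ^ 4) := by
  have h := Real.pow_div_factorial_le_exp (c * y) (by positivity) 4
  have h1 : y ^ 4 * Real.exp (-(c * y)) ≤ 24 / c ^ 4 := by
    rw [Real.exp_neg, ← div_eq_mul_inv, div_le_div_iff₀ (Real.exp_pos _) (by positivity)]
    simp [Nat.factorial] at h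
    rw [div_le_iff₀ (by norm_num)] at h
    nlinarith
  have h2 : Real.exp (-(c * y)) ≤ 1 := Real.exp_le_one_iff.2 (by nlinarith)
  rw [mul_assoc]
  refine mul_le_mul_of_nonneg_left ?_ hK
  have h3 : (1 + y ^ 2) ^ 2 ≤ 2 + 2 * y ^ 4 := by nlinarith [sq_nonneg (1 - y ^ 2)]
  have := mul_le_mul_of_nonneg_right h3 (Real.exp_pos (-(c * y))).le
  have e : 48 / c ^ 4 = 2 * (24 / c ^ 4) := by ring
  rw [e]; nlinarith

theorem aux_lim_s19 (c α β γ : ℝ) (hc : 0 < c) :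
    Tendsto (fun y => (α * y ^ 2 + β * y + γ) * Real.exp (-(c * y))) atTop (𝓝 0) := by
  have h (n : ℕ) : Tendsto (fun y : ℝ => y ^ n * Real.exp (-(c * y))) atTop (𝓝 0) := by
    have := (tendsto_rpow_mul_exp_neg_mul_atTop_nhds_zero n c hc)
    simpa using this
  have := (((h 2).const_mul α).add ((h 1).const_mul β)).add ((h 0).const_mul γ)
  simp only [mul_zero, add_zero] at this
  refine this.congr fun y => ?_
  ring

theorem aux_energy (ε a : ℝ) (h0 : 0 < ε) (ha : 0 < a) :
    IntegrableOn (fun x => Real.exp (-(ε * Real.tan (x / ε) * a)) *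
      (-(deriv (deriv (fun x => Real.exp (-(ε * Real.tan (x / ε) * a)))) x)))
      (Ioo (0:ℝ) (ε * π / 2)) ∧
    (∫ x in Ioo (0:ℝ) (ε * π / 2), Real.exp (-(ε * Real.tan (x / ε) * a)) *
      (-(deriv (deriv (fun x => Real.exp (-(ε * Real.tan (x / ε) * a)))) x)))
      = -(a / 2 - 1 / (4 * a * ε ^ 2)) := by
  have hL : 0 < ε * π / 2 := by positivity
  set q : ℝ → ℝ := fun x => -(a ^ 2 * (1 + Real.tan (x / ε) ^ 2) ^ 2
        - 2 * a / ε * (Real.tan (x / ε) * (1 + Real.tan (x / ε) ^ 2)))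
        * Real.exp (-(2 * ε * a * Real.tan (x / ε))) with hq
  have hmem : ∀ x ∈ Ioo (0:ℝ) (ε * π / 2), x ∈ Ioo (-(ε * π / 2)) (ε * π / 2) :=
    fun x hx => ⟨by linarith [hx.1], hx.2⟩
  have heq : EqOn (fun x => Real.exp (-(ε * Real.tan (x / ε) * a)) *
      (-(deriv (deriv (fun x => Real.exp (-(ε * Real.tan (x / ε) * a)))) x))) q
      (Ioo (0:ℝ) (ε * π / 2)) := by
    intro x hx
    simp only [hq]
    rw [aux_dd ε a x h0 (hmem x hx)]
    have : Real.exp (-(2 * ε * a * Real.tan (x / ε))) =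
      Real.exp (-(ε * Real.tan (x / ε) * a)) * Real.exp (-(ε * Real.tan (x / ε) * a)) := by
      rw [← Real.exp_add]; ring_nf
    rw [this]; ring
  have hcont : ContinuousOn q (Ioo 0 (ε * π / 2)) := by
    have := aux_ct ε h0
    simp only [hq]
    fun_prop
  have hint : IntegrableOn q (Ioo 0 (ε * π / 2)) := by
    refine Integrable.mono' (g := fun _ => (a ^ 2 + 2 * a / ε) * (2 + 48 / (2 * ε * a) ^ 4))
      (integrableOn_const (by simp))
      (hcont.aestronglyMeasurable measurableSet_Ioo) ?_
    refine (ae_restrict_iff' measurableSet_Ioo).2 (Eventually.of_forall fun x hx => ?_)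
    have hy : 0 ≤ Real.tan (x / ε) := by
      have := aux_tan ε x h0 hx
      by_contra hn
      nlinarith [hx.1]
    refine le_trans ?_ (aux_bound (2 * ε * a) (Real.tan (x / ε)) (a ^ 2 + 2 * a / ε)
      (by positivity) hy (by positivity))
    simp only [hq]
    rw [norm_mul, Real.norm_of_nonneg (Real.exp_pos _).le]
    refine mul_le_mul_of_nonneg_right ?_ (Real.exp_pos _).le
    generalize Real.tan (x / ε) = y at hy
    have hb : 0 < 2 * a / ε := by positivity
    generalize 2 * a / ε = b at hb
    have h1 : y * (1 + y ^ 2) ≤ (1 + y ^ 2) ^ 2 := by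
      have : y ≤ 1 + y ^ 2 := by nlinarith [sq_nonneg (y - 1)]
      nlinarith [sq_nonneg y]
    have h2 : 0 ≤ y * (1 + y ^ 2) := by positivity
    have h3 : b * (y * (1 + y ^ 2)) ≤ b * (1 + y ^ 2) ^ 2 := mul_le_mul_of_nonneg_left h1 hb.le
    have h4 : 0 ≤ b * (y * (1 + y ^ 2)) := by positivity
    have h5 : 0 ≤ a ^ 2 * (1 + y ^ 2) ^ 2 := by positivity
    rw [Real.norm_eq_abs, abs_le]
    constructor <;> nlinarith
  refine ⟨hint.congr_fun heq.symm measurableSet_Ioo, ?_⟩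
  rw [setIntegral_congr_fun measurableSet_Ioo heq, ← integral_Ioc_eq_integral_Ioo,
    ← intervalIntegral.integral_of_le hL.le]
  let F : ℝ → ℝ := fun x => (a / 2 * Real.tan (x / ε) ^ 2 + (-(1 / (2 * ε))) * Real.tan (x / ε)
    + (a / 2 - 1 / (4 * a * ε ^ 2))) * Real.exp (-(2 * ε * a * Real.tan (x / ε)))
  have hF : ∀ x ∈ Ioo (-(ε * π / 2)) (ε * π / 2), HasDerivAt F (q x) x := by
    intro x hx
    have ht := aux_d1 ε 0 x h0 hx
    have h := ((((ht.pow 2).const_mul (a / 2)).add (ht.const_mul (-(1 / (2 * ε))))).add_const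
      (a / 2 - 1 / (4 * a * ε ^ 2))).mul ((ht.const_mul (2 * ε * a)).neg.exp)
    refine h.congr_deriv ?_
    simp [hq]
    field_simp
    ring
  have hl0 : Tendsto F (𝓝[>] 0) (𝓝 (a / 2 - 1 / (4 * a * ε ^ 2))) := by
    have := (hF 0 ⟨by linarith, hL⟩).continuousAt.tendsto
    have h2 : F 0 = a / 2 - 1 / (4 * a * ε ^ 2) := by simp [F]
    rw [h2] at this
    exact this.mono_left nhdsWithin_le_nhds
  have hl1 : Tendsto F (𝓝[<] (ε * π / 2)) (𝓝 0) := by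
    refine (aux_lim_s19 (2 * ε * a) (a / 2) (-(1 / (2 * ε))) (a / 2 - 1 / (4 * a * ε ^ 2))
      (by positivity)).comp (Real.tendsto_tan_pi_div_two.comp ?_)
    refine tendsto_nhdsWithin_iff.2 ⟨?_, ?_⟩
    · have : Tendsto (fun x : ℝ => x / ε) (𝓝 (ε * π / 2)) (𝓝 (ε * π / 2 / ε)) :=
        (continuous_id.div_const ε).tendsto _
      have e : ε * π / 2 / ε = π / 2 := by field_simp
      rw [e] at this
      exact this.mono_left nhdsWithin_le_nhds
    · filter_upwards [self_mem_nhdsWithin] with x hx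
      have hx' : x < ε * π / 2 := hx
      show x / ε < π / 2
      rw [div_lt_iff₀ h0]; linarith
  rw [intervalIntegral.integral_eq_sub_of_hasDerivAt_of_tendsto hL
    (fun x hx => hF x (hmem x hx)) ?_ hl0 hl1]
  · ring
  · rw [intervalIntegrable_iff_integrableOn_Ioo_of_le hL.le]; exact hint

theorem aux_tlim : Tendsto (fun t : ℝ => Real.tan (t / 2)) (𝓝[>] 0) (𝓝[>] 0) := by
  refine tendsto_nhdsWithin_iff.2 ⟨?_, ?_⟩
  · have h : ContinuousAt (fun t : ℝ => Real.tan (t / 2)) 0 := by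
      refine ContinuousAt.comp (g := Real.tan) ?_ (by fun_prop)
      exact Real.continuousAt_tan.2 (by simp)
    have := h.tendsto
    simp only [zero_div, Real.tan_zero] at this
    exact this.mono_left nhdsWithin_le_nhds
  · filter_upwards [Ioo_mem_nhdsGT Real.pi_pos] with t ht
    exact Real.tan_pos_of_pos_of_lt_pi_div_two (by linarith [ht.1]) (by linarith [ht.2])

theorem aux_pos (t : ℝ) (ht : t ∈ Ioo (0:ℝ) (π / 2)) : 0 < Real.tan (t / 2) :=
  Real.tan_pos_of_pos_of_lt_pi_div_two (by linarith [ht.1]) (by linarith [ht.1, ht.2])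

theorem statement19 (ε : ℝ) (hε0 : 0 < ε) (hε1 : ε < 1 / Real.sqrt 2) :
    (∀ t ∈ Ioo (0:ℝ) (π / 2),
      (∫ x in Ioo (0:ℝ) (ε * π / 2), boundaryState ε t x ^ 2) ≤ Real.tan (t / 2) / 2) ∧
    Tendsto (fun t => ∫ x in Ioo (0:ℝ) (ε * π / 2), boundaryState ε t x ^ 2)
      (𝓝[>] 0) (𝓝 0) ∧
    (∀ t ∈ Ioo (0:ℝ) (π / 2),
      IntegrableOn
        (fun x => boundaryState ε t x * (-(deriv (deriv (boundaryState ε t)) x)))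
        (Ioo (0:ℝ) (ε * π / 2))) ∧
    Tendsto
      (fun t =>
        (∫ x in Ioo (0:ℝ) (ε * π / 2),
          boundaryState ε t x * (-(deriv (deriv (boundaryState ε t)) x))) /
        (∫ x in Ioo (0:ℝ) (ε * π / 2), boundaryState ε t x ^ 2))
      (𝓝[>] 0) atBot := by
  have hb : ∀ t, boundaryState ε t =
      fun x => Real.exp (-(ε * Real.tan (x / ε) * (Real.tan (t / 2))⁻¹)) := by
    intro t; ext x; simp [boundaryState, div_eq_mul_inv]
  simp only [hb]
  have hT := aux_tlim
  have hp : ∀ᶠ t in 𝓝[>] (0:ℝ), t ∈ Ioo (0:ℝ) (π / 2) :=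
    Ioo_mem_nhdsGT (by positivity)
  have hi : ∀ t ∈ Ioo (0:ℝ) (π / 2), (∫ x in Ioo (0:ℝ) (ε * π / 2),
      Real.exp (-(ε * Real.tan (x / ε) * (Real.tan (t / 2))⁻¹)) ^ 2) ≤ Real.tan (t / 2) / 2 := by
    intro t ht
    refine (aux_norm ε _ hε0 (inv_pos.2 (aux_pos t ht))).2.trans (le_of_eq ?_)
    have := aux_pos t ht
    field_simp
  refine ⟨hi, ?_, fun t ht => (aux_energy ε _ hε0 (inv_pos.2 (aux_pos t ht))).1, ?_⟩
  · have h2 : Tendsto (fun t : ℝ => Real.tan (t / 2) / 2) (𝓝[>] 0) (𝓝 0) := by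
      simpa using (hT.mono_right nhdsWithin_le_nhds).div_const 2
    refine tendsto_of_tendsto_of_tendsto_of_le_of_le' tendsto_const_nhds h2 ?_ ?_
    · exact Eventually.of_forall fun t => integral_nonneg fun x => by positivity
    · filter_upwards [hp] with t ht using hi t ht
  · have ha : Tendsto (fun t : ℝ => (Real.tan (t / 2))⁻¹) (𝓝[>] 0) atTop :=
      tendsto_inv_nhdsGT_zero.comp hT
    have hbd : Tendsto (fun t : ℝ => -((Real.tan (t / 2))⁻¹ ^ 2) + 1 / (2 * ε ^ 2))
        (𝓝[>] 0) atBot :=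
      tendsto_atBot_add_const_right _ _
        (tendsto_neg_atTop_atBot.comp ((tendsto_pow_atTop two_ne_zero).comp ha))
    refine tendsto_atBot_mono' _ ?_ hbd
    filter_upwards [hp, ha.eventually_ge_atTop (1 / ε)] with t ht hge
    have hpos := inv_pos.2 (aux_pos t ht)
    generalize (Real.tan (t / 2))⁻¹ = a at *
    rw [(aux_energy ε a hε0 hpos).2]
    obtain ⟨hD, hD2⟩ := aux_norm ε a hε0 hpos
    rw [div_le_iff₀ hD]
    generalize (∫ x in Ioo (0:ℝ) (ε * π / 2),
      Real.exp (-(ε * Real.tan (x / ε) * a)) ^ 2) = D at *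
    have h1 : 1 / ε ^ 2 ≤ a ^ 2 := by
      have := pow_le_pow_left₀ (by positivity) hge 2
      simpa using this
    have h2 : 0 ≤ a ^ 2 - 1 / (2 * ε ^ 2) := by
      have e : 1 / (2 * ε ^ 2) = 1 / ε ^ 2 / 2 := by field_simp
      have : 0 < 1 / ε ^ 2 := by positivity
      rw [e]; linarith
    have h3 := mul_le_mul_of_nonneg_left hD2 h2
    have h4 : (a ^ 2 - 1 / (2 * ε ^ 2)) * (1 / (2 * a)) = a / 2 - 1 / (4 * a * ε ^ 2) := by
      field_simp
      ring
    rw [h4] at h3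
    linarith
end
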